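/- arXiv:2203.12532 — 4 statements merged into one kernel-verified Lean document; each statement's English description precedes it below -/
import Mathlib

section
/- Under the two-set greedy algorithm, if d_n(F) ≤ C₀ n^{−α} for all n = 1, 2, … for some constants C₀ > 0 and α > 0, then σ_n(F̃) ≤ C₁ n^{−α} for all n ≥ 1, where C₁ := 2^{5α+1} C₀. -/
lemma le_of_sq_le_sq_aux {a b : ℝ} (h : a ^ 2 ≤ b ^ 2) (hb : 0 ≤ b) : a ≤ b :=
  abs_le_of_sq_le_sq' h hb |>.2

open InnerProductSpace in
lemma aux_det {K : ℕ} (v : Fin K → EuclideanSpace ℝ (Fin K))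
    (W : Submodule ℝ (EuclideanSpace ℝ (Fin K))) (s d : ℝ) (hs : 0 ≤ s) (hd : 0 ≤ d)
    (h1 : ∀ i, ‖v i‖ ≤ s) (h2 : ∀ i, ‖Wᗮ.starProjection (v i)‖ ≤ d) :
    d ^ (Module.finrank ℝ W) * s ^ (K - Module.finrank ℝ W) *
      |(EuclideanSpace.basisFun (Fin K) ℝ).toBasis.det v| ≤ (√2 * (d * s)) ^ K := by
  set b := EuclideanSpace.basisFun (Fin K) ℝ with hb
  let T : EuclideanSpace ℝ (Fin K) →ₗ[ℝ] EuclideanSpace ℝ (Fin K) :=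
    d • (W.starProjection : EuclideanSpace ℝ (Fin K) →ₗ[ℝ] EuclideanSpace ℝ (Fin K)) +
    s • (Wᗮ.starProjection : EuclideanSpace ℝ (Fin K) →ₗ[ℝ] EuclideanSpace ℝ (Fin K))
  have hTapp : ∀ x, T x = d • W.starProjection x + s • Wᗮ.starProjection x := fun x => rfl
  have hTW : ∀ x ∈ W, T x = d • x := by
    intro x hx
    rw [hTapp, Submodule.starProjection_eq_self_iff.mpr hx,
      (Submodule.starProjection_apply_eq_zero_iff _).mpr (by simpa using hx)]
    simp
  have hinv : W ≤ W.comap T := by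
    intro x hx
    rw [Submodule.mem_comap, hTW x hx]
    exact W.smul_mem _ hx
  have hdet : LinearMap.det T = d ^ (Module.finrank ℝ W) * s ^ (K - Module.finrank ℝ W) := by
    rw [LinearMap.det_eq_det_mul_det W T hinv]
    have e1 : T.restrict hinv = d • LinearMap.id := by
      ext1 x
      apply Subtype.ext
      simpa using hTW x x.2
    have e2 : W.mapQ W T hinv = s • LinearMap.id := by
      apply Submodule.linearMap_qext
      ext1 x
      simp only [LinearMap.comp_apply, Submodule.mkQ_apply, Submodule.mapQ_apply,
        LinearMap.smul_apply, LinearMap.id_apply]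
      rw [← Submodule.Quotient.mk_smul, Submodule.Quotient.eq, hTapp]
      have : W.starProjection x + Wᗮ.starProjection x = x :=
        Submodule.starProjection_add_starProjection_orthogonal x
      have h3 : d • W.starProjection x + s • Wᗮ.starProjection x - s • x
          = (d - s) • W.starProjection x := by
        nth_rewrite 3 [← this]
        module
      rw [h3]
      exact W.smul_mem _ (Submodule.starProjection_apply_mem _ _)
    rw [e1, e2, LinearMap.det_smul, LinearMap.det_smul]
    have hq := W.finrank_quotient_add_finrank
    rw [finrank_euclideanSpace_fin] at hq
    have : Module.finrank ℝ (EuclideanSpace ℝ (Fin K) ⧸ W) = K - Module.finrank ℝ W := by omega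
    rw [this]; simp
  have : Fact (Module.finrank ℝ (EuclideanSpace ℝ (Fin K)) = K) := ⟨by simp⟩
  have hnorm : ∀ i, ‖T (v i)‖ ≤ √2 * (d * s) := by
    intro i
    refine le_of_sq_le_sq_aux ?_ (by positivity)
    have horth : inner ℝ (d • W.starProjection (v i)) (s • Wᗮ.starProjection (v i)) = 0 := by
      rw [inner_smul_left, inner_smul_right,
        Submodule.inner_right_of_mem_orthogonal (Submodule.starProjection_apply_mem W (v i))
          (Submodule.starProjection_apply_mem Wᗮ (v i))]
      simp
    have := norm_add_sq_eq_norm_sq_add_norm_sq_real horth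
    rw [hTapp, sq, this, norm_smul, norm_smul, mul_pow, Real.sq_sqrt (by norm_num)]
    have h3 : ‖W.starProjection (v i)‖ ≤ s := (W.norm_starProjection_apply_le _).trans (h1 i)
    have h4 := h2 i
    rw [Real.norm_of_nonneg hs, Real.norm_of_nonneg hd]
    have h5 : d * ‖W.starProjection (v i)‖ ≤ d * s := by gcongr
    have h6 : s * ‖Wᗮ.starProjection (v i)‖ ≤ d * s := by rw [mul_comm d]; gcongr
    have h7 : 0 ≤ d * ‖W.starProjection (v i)‖ := by positivity
    have h8 : 0 ≤ s * ‖Wᗮ.starProjection (v i)‖ := by positivity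
    nlinarith
  have hv := (b.toBasis.orientation).abs_volumeForm_apply_le (T ∘ v)
  rw [Orientation.volumeForm_robust _ b rfl, Module.Basis.det_comp, hdet, abs_mul,
    abs_of_nonneg (by positivity)] at hv
  refine hv.trans ?_
  calc ∏ i, ‖(T ∘ v) i‖ ≤ ∏ i : Fin K, (√2 * (d * s)) :=
        Finset.prod_le_prod (fun _ _ => norm_nonneg _) (fun i _ => hnorm i)
    _ = _ := by simp

open InnerProductSpace in
lemma aux_gs {H : Type*} [NormedAddCommGroup H] [InnerProductSpace ℝ H] (f : ℕ → H)
    (N K m : ℕ) (hK : m ≤ K) (s d : ℝ) (hs : 0 < s) (hd : 0 < d) (hds : d ≤ s)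
    (hne : ∀ i < N + K, gramSchmidt ℝ f i ≠ 0)
    (h1 : ∀ i, N ≤ i → Metric.infDist (f i)
      ((Submodule.span ℝ (f '' Set.Iio N) : Submodule ℝ H) : Set H) ≤ s)
    (Y : Submodule ℝ H) (hY : Module.rank ℝ Y ≤ m)
    (h2 : ∀ i, Metric.infDist (f i) (Y : Set H) ≤ d) :
    ∏ i : Fin K, ‖gramSchmidt ℝ f (N + i)‖ ≤ √2 ^ K * (s ^ m * d ^ (K - m)) := by
  let e : Fin K → H := fun j => gramSchmidtNormed ℝ f (N + j)
  have he : Orthonormal ℝ e := by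
    refine ⟨fun j => ?_, fun i j hij => ?_⟩
    · apply gramSchmidtNormed_unit_length'
      have := hne (N + j) (by omega)
      simpa [gramSchmidtNormed] using this
    · have : N + (i : ℕ) ≠ N + j := by
        intro h; apply hij; ext; omega
      simp [e, gramSchmidtNormed, inner_smul_left, inner_smul_right,
        gramSchmidt_orthogonal ℝ f this]
  let A : H →ₗ[ℝ] EuclideanSpace ℝ (Fin K) :=
    (WithLp.linearEquiv 2 ℝ (Fin K → ℝ)).symm.toLinearMap ∘ₗ
      LinearMap.pi (fun j => (innerₛₗ ℝ (e j)))
  have hA : ∀ x j, A x j = inner ℝ (e j) x := fun x j => rfl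
  have hAn : ∀ x, ‖A x‖ ≤ ‖x‖ := by
    intro x
    refine le_of_sq_le_sq_aux ?_ (norm_nonneg _)
    rw [EuclideanSpace.norm_sq_eq]
    simp only [hA]
    exact he.sum_inner_products_le x
  have hfin : Module.Finite ℝ Y :=
    Module.rank_lt_aleph0_iff.mp (hY.trans_lt (Cardinal.natCast_lt_aleph0))
  have hW : Module.finrank ℝ (Y.map A) ≤ m :=
    (Submodule.finrank_map_le A Y).trans (Module.finrank_le_of_rank_le hY)
  have hA0 : ∀ x ∈ Submodule.span ℝ (f '' Set.Iio N), A x = 0 := by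
    intro x hx
    have : Submodule.span ℝ (f '' Set.Iio N) ≤ LinearMap.ker A := by
      rw [Submodule.span_le]
      rintro _ ⟨i, hi, rfl⟩
      rw [SetLike.mem_coe, LinearMap.mem_ker]
      ext j
      rw [hA]
      have hi' : i < N + j := by have : i < N := hi; omega
      simp [e, gramSchmidtNormed, inner_smul_left, gramSchmidt_inv_triangular ℝ f hi']
    exact this hx
  have key := aux_det (fun i : Fin K => A (f (N + i))) (Y.map A) s d hs.le hd.le
    (by
      intro i
      refine le_trans ?_ (h1 (N + i) (by omega))
      rw [Metric.le_infDist ⟨0, Submodule.zero_mem _⟩]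
      intro y hy
      rw [dist_eq_norm]
      refine le_trans (le_of_eq ?_) (hAn _)
      rw [map_sub, hA0 y hy, sub_zero])
    (by
      intro i
      refine le_trans ?_ (h2 (N + i))
      rw [Metric.le_infDist ⟨0, Submodule.zero_mem _⟩]
      intro y hy
      rw [dist_eq_norm]
      refine le_trans ?_ (hAn _)
      refine le_trans (le_of_eq ?_) (Submodule.norm_starProjection_apply_le (Y.map A)ᗮ _)
      have h0 : (Y.map A)ᗮ.starProjection (A y) = 0 :=
        (Submodule.starProjection_apply_eq_zero_iff _).mpr
          (Submodule.le_orthogonal_orthogonal _ (Submodule.mem_map_of_mem hy))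
      rw [map_sub, map_sub, h0, sub_zero])
  have hdet : (EuclideanSpace.basisFun (Fin K) ℝ).toBasis.det (fun i : Fin K => A (f (N + i)))
      = ∏ i : Fin K, ‖gramSchmidt ℝ f (N + i)‖ := by
    rw [Module.Basis.det_apply, Matrix.det_of_isUpperTriangular]
    · refine Finset.prod_congr rfl fun i _ => ?_
      change A (f (N + i)) i = _
      rw [hA]
      have h0 : inner ℝ (gramSchmidt ℝ f (N + i)) (f (N + i)) = ‖gramSchmidt ℝ f (N + i)‖ ^ 2 := by
        have h4 := congrArg (inner ℝ (gramSchmidt ℝ f (N + i))) (gramSchmidt_def'' ℝ f (N + i))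
        rw [h4, inner_add_right, inner_sum, Finset.sum_eq_zero, add_zero,
          real_inner_self_eq_norm_sq]
        intro j hj
        have hj' : N + (i : ℕ) ≠ j := by
          have := Finset.mem_Iio.mp hj
          omega
        rw [inner_smul_right, gramSchmidt_orthogonal ℝ f hj', mul_zero]
      have h3 := norm_pos_iff.mpr (hne (N + i) (by omega))
      simp only [e, gramSchmidtNormed, inner_smul_left, h0]
      simp
      field_simp
    · intro i j hij
      have hij : j < i := hij
      change A (f (N + j)) i = _
      rw [hA]
      have hi' : N + (j : ℕ) < N + i := by have : (j : ℕ) < i := hij; omega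
      simp [e, gramSchmidtNormed, inner_smul_left, gramSchmidt_inv_triangular ℝ f hi']
  rw [hdet, abs_of_nonneg (Finset.prod_nonneg fun _ _ => norm_nonneg _)] at key
  generalize Module.finrank ℝ (Y.map A) = w at key hW
  generalize ∏ i : Fin K, ‖gramSchmidt ℝ f (N + i)‖ = P at key ⊢
  obtain ⟨k, rfl⟩ := Nat.exists_eq_add_of_le hW
  obtain ⟨l, rfl⟩ := Nat.exists_eq_add_of_le hK
  rw [show w + k + l - w = k + l by omega] at key
  rw [show w + k + l - (w + k) = l by omega]
  have e1 : (√2 * (d * s)) ^ (w + k + l) =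
      d ^ w * s ^ (k + l) * (√2 ^ (w + k + l) * (s ^ w * d ^ (k + l))) := by ring
  rw [e1] at key
  refine (le_of_mul_le_mul_left key (by positivity)).trans ?_
  apply mul_le_mul_of_nonneg_left _ (by positivity)
  rw [pow_add d, pow_add s, mul_assoc]
  gcongr

open InnerProductSpace in
lemma aux_half {H : Type*} [NormedAddCommGroup H] [InnerProductSpace ℝ H] (f : ℕ → H)
    (S : ℕ → ℝ) (hS0 : ∀ n, 0 ≤ S n) (hanti : Antitone S)
    (h1 : ∀ N i, Metric.infDist (f i)
      ((Submodule.span ℝ (f '' Set.Iio N) : Submodule ℝ H) : Set H) ≤ S N)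
    (hgs : ∀ n, S n ≤ ‖gramSchmidt ℝ f n‖)
    (m : ℕ) (hm : 1 ≤ m) (d : ℝ) (hd : 0 < d)
    (Y : Submodule ℝ H) (hY : Module.rank ℝ Y ≤ m)
    (h2 : ∀ i, Metric.infDist (f i) (Y : Set H) ≤ d) (N : ℕ) :
    S (N + (2 * m - 1)) ^ 2 ≤ 2 * S N * d ∧ (m = 1 → S 1 ≤ 2 * d) := by
  have main : ∀ N, d ≤ S N → 0 < S (N + (2 * m - 1)) →
      ∏ i : Fin (2 * m), S (N + i) ≤ (2 * (S N * d)) ^ m := by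
    intro N hdN hpos
    have hp : ∀ i < N + 2 * m, 0 < S i := fun i hi => hpos.trans_le (hanti (by omega))
    have := aux_gs f N (2 * m) m (by omega) (S N) d (hp N (by omega)) hd hdN
      (fun i hi => norm_pos_iff.mp ((hp i hi).trans_le (hgs i))) (fun i _ => h1 N i) Y hY h2
    calc ∏ i : Fin (2 * m), S (N + i) ≤ ∏ i : Fin (2 * m), ‖gramSchmidt ℝ f (N + i)‖ :=
          Finset.prod_le_prod (fun _ _ => hS0 _) (fun _ _ => hgs _)
      _ ≤ _ := this
      _ = _ := by
        rw [show 2 * m - m = m by omega, pow_mul, Real.sq_sqrt (by norm_num), mul_pow, mul_pow]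
  constructor
  · rcases (hS0 (N + (2 * m - 1))).eq_or_lt with h0 | hpos
    · rw [← h0]
      have := hS0 N
      simp only [ne_eq, OfNat.ofNat_ne_zero, not_false_eq_true, zero_pow]
      positivity
    have hle : S (N + (2 * m - 1)) ≤ S N := hanti (by omega)
    rcases lt_or_ge (S N) d with hlt | hge
    · nlinarith
    have hmain := main N hge hpos
    have h3 : (S (N + (2 * m - 1)) ^ 2) ^ m ≤ ∏ i : Fin (2 * m), S (N + i) := by
      rw [← pow_mul]
      calc _ = ∏ i : Fin (2 * m), S (N + (2 * m - 1)) := by simp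
        _ ≤ _ := Finset.prod_le_prod (fun _ _ => hS0 _) (fun i _ => hanti (by omega))
    have h4 := h3.trans hmain
    rw [mul_assoc]
    have := hS0 N
    exact (pow_le_pow_iff_left₀ (by positivity) (by positivity) (by omega)).mp h4
  · rintro rfl
    rcases (hS0 1).eq_or_lt with h0 | hpos
    · rw [← h0]; positivity
    have hle : S 1 ≤ S 0 := hanti (by omega)
    rcases lt_or_ge (S 0) d with hlt | hge
    · nlinarith
    have hmain := main 0 hge (by simpa using hpos)
    simp [Fin.prod_univ_two] at hmain
    have h5 : 0 < S 0 := hpos.trans_le hle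
    nlinarith


/-- Two-set greedy algorithm: algebraic decay of the Kolmogorov widths
`d_n(F) ≤ C₀ n^{-α}` implies `σ_n(F̃) ≤ 2^{5α+1} C₀ n^{-α}` for all `n ≥ 1`. -/
theorem two_set_greedy_algebraic_decay
    {H : Type*} [NormedAddCommGroup H] [InnerProductSpace ℝ H]
    (F Ftil : Set H) (hsub : Ftil ⊆ F) (hcomp : IsCompact F)
    (hbound : ∀ f ∈ F, ‖f‖ ≤ 1)
    (f : ℕ → H) (hmem : ∀ n, f n ∈ Ftil)
    (hgreedy : ∀ n : ℕ,
      Metric.infDist (f n) ((Submodule.span ℝ (f '' Set.Iio n) : Submodule ℝ H) : Set H)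
        = ⨆ g : Ftil, Metric.infDist (g : H)
            ((Submodule.span ℝ (f '' Set.Iio n) : Submodule ℝ H) : Set H))
    (C₀ α : ℝ) (hC₀ : 0 < C₀) (hα : 0 < α)
    (hd : ∀ n : ℕ, 1 ≤ n →
      (⨅ Y : {Y : Submodule ℝ H // Module.rank ℝ Y ≤ n},
          ⨆ g : F, Metric.infDist (g : H) ((Y : Submodule ℝ H) : Set H))
        ≤ C₀ * (n : ℝ) ^ (-α)) :
    ∀ n : ℕ, 1 ≤ n →
      (⨆ g : Ftil, Metric.infDist (g : H)
          ((Submodule.span ℝ (f '' Set.Iio n) : Submodule ℝ H) : Set H))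
        ≤ 2 ^ (5 * α + 1) * C₀ * (n : ℝ) ^ (-α) := by
  set S : ℕ → ℝ := fun n => ⨆ g : Ftil, Metric.infDist (g : H)
            ((Submodule.span ℝ (f '' Set.Iio n) : Submodule ℝ H) : Set H) with hS
  have hb : ∀ (V : Submodule ℝ H) (g : H), g ∈ F → Metric.infDist g (V : Set H) ≤ 1 := by
    intro V g hg
    refine (Metric.infDist_le_dist_of_mem (V.zero_mem)).trans ?_
    rw [dist_zero_right]
    exact hbound g hg
  have hbF : ∀ V : Submodule ℝ H,
      BddAbove (Set.range fun g : F => Metric.infDist (g : H) (V : Set H)) := by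
    intro V
    exact ⟨1, by rintro _ ⟨g, rfl⟩; exact hb V g g.2⟩
  have hbT : ∀ V : Submodule ℝ H,
      BddAbove (Set.range fun g : Ftil => Metric.infDist (g : H) (V : Set H)) := by
    intro V
    exact ⟨1, by rintro _ ⟨g, rfl⟩; exact hb V g (hsub g.2)⟩
  have hS0 : ∀ n, 0 ≤ S n := fun n => Real.iSup_nonneg fun _ => Metric.infDist_nonneg
  have hanti : Antitone S := by
    intro a b hab
    refine ciSup_mono (hbT _) fun g => ?_
    refine Metric.infDist_le_infDist_of_subset ?_ ⟨0, Submodule.zero_mem _⟩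
    exact Submodule.span_mono (Set.image_mono (Set.Iio_subset_Iio hab))
  have h1 : ∀ N i, Metric.infDist (f i)
      ((Submodule.span ℝ (f '' Set.Iio N) : Submodule ℝ H) : Set H) ≤ S N :=
    fun N i => le_ciSup (hbT (Submodule.span ℝ (f '' Set.Iio N))) ⟨f i, hmem i⟩
  have hgs : ∀ n, S n ≤ ‖InnerProductSpace.gramSchmidt ℝ f n‖ := by
    intro n
    rw [hS]
    simp only
    rw [← hgreedy n]
    have hm : f n - InnerProductSpace.gramSchmidt ℝ f n ∈ Submodule.span ℝ (f '' Set.Iio n) := by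
      rw [← InnerProductSpace.span_gramSchmidt_Iio ℝ f n]
      have := InnerProductSpace.gramSchmidt_def'' ℝ f n
      rw [sub_eq_of_eq_add' this]
      refine Submodule.sum_mem _ fun i hi => Submodule.smul_mem _ _ (Submodule.subset_span ?_)
      exact ⟨i, Finset.mem_Iio.mp hi, rfl⟩
    refine (Metric.infDist_le_dist_of_mem hm).trans ?_
    rw [dist_eq_norm, sub_sub_cancel]
  have hd' : ∀ m : ℕ, 1 ≤ m → ∀ d, C₀ * (m : ℝ) ^ (-α) < d →
      ∃ Y : Submodule ℝ H, Module.rank ℝ Y ≤ m ∧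
        ∀ i, Metric.infDist (f i) (Y : Set H) ≤ d := by
    intro m hm d hlt
    have : Nonempty {Y : Submodule ℝ H // Module.rank ℝ Y ≤ m} := ⟨⟨⊥, by simp⟩⟩
    obtain ⟨Y, hY⟩ := exists_lt_of_ciInf_lt ((hd m hm).trans_lt hlt)
    refine ⟨Y.1, Y.2, fun i => ?_⟩
    exact (le_ciSup (hbF Y.1) ⟨f i, hsub (hmem i)⟩).trans hY.le
  have hstep : ∀ m : ℕ, 1 ≤ m → ∀ N, S (N + (2 * m - 1)) ^ 2 ≤
      2 * S N * (C₀ * (m : ℝ) ^ (-α)) := by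
    intro m hm N
    have hcont : Filter.Tendsto (fun d => 2 * S N * d) (nhdsWithin (C₀ * (m : ℝ) ^ (-α))
        (Set.Ioi (C₀ * (m : ℝ) ^ (-α)))) (nhds (2 * S N * (C₀ * (m : ℝ) ^ (-α)))) :=
      ((continuous_const.mul continuous_id).tendsto _).mono_left nhdsWithin_le_nhds
    refine ge_of_tendsto hcont ?_
    filter_upwards [self_mem_nhdsWithin] with d hlt
    obtain ⟨Y, hY, h2⟩ := hd' m hm d hlt
    exact (aux_half f S hS0 hanti h1 hgs m hm d (lt_of_le_of_lt (by positivity) hlt) Y hY h2 N).1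
  have hbase : S 1 ≤ 2 * C₀ := by
    have : ∀ d, C₀ < d → S 1 ≤ 2 * d := by
      intro d hlt
      obtain ⟨Y, hY, h2⟩ := hd' 1 le_rfl d (by simpa using hlt)
      exact (aux_half f S hS0 hanti h1 hgs 1 le_rfl d (hC₀.trans hlt) Y hY h2 0).2 rfl
    have : S 1 / 2 ≤ C₀ := le_of_forall_gt_imp_ge_of_dense fun d hlt => by
      have := this d hlt; linarith
    linarith
  suffices hgoal : ∀ n : ℕ, 1 ≤ n → S n ≤ 2 ^ (5 * α + 1) * C₀ * (n : ℝ) ^ (-α) from hgoal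
  clear_value S
  -- powers of two; `q = 2 ^ α`
  set q : ℝ := (2 : ℝ) ^ α with hq
  have hq1 : 1 ≤ q := Real.one_le_rpow (by norm_num) hα.le
  have hq0 : 0 < q := by linarith
  have hpow : ∀ k : ℕ, (((2 ^ k : ℕ) : ℝ)) ^ (-α) = (q ^ k)⁻¹ := by
    intro k
    rw [Real.rpow_neg (by positivity)]
    push_cast
    rw [← Real.rpow_natCast, ← Real.rpow_mul (by norm_num), mul_comm, Real.rpow_mul (by norm_num),
      Real.rpow_natCast]
  have hdy : ∀ k : ℕ, S (2 ^ (k + 1)) ≤ 2 * q ^ 3 * C₀ * (q ^ (k + 1))⁻¹ := by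
    intro k
    induction k with
    | zero =>
      have h3 : S 2 ≤ S 1 := hanti (by norm_num)
      have h4 : 2 * q ^ 3 * C₀ * (q ^ (0 + 1))⁻¹ = 2 * C₀ * q ^ 2 := by field_simp; ring
      rw [h4]
      have h5 : 1 ≤ q ^ 2 := one_le_pow₀ hq1
      simp only [zero_add, pow_one]
      nlinarith
    | succ k ih =>
      have h3 := hstep (2 ^ k) Nat.one_le_two_pow (2 ^ (k + 1))
      rw [hpow] at h3
      have h4 : S (2 ^ (k + 1 + 1)) ≤ S (2 ^ (k + 1) + (2 * 2 ^ k - 1)) := by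
        apply hanti
        rw [pow_succ, pow_succ]
        omega
      refine le_of_sq_le_sq_aux ?_ (by positivity)
      calc S (2 ^ (k + 1 + 1)) ^ 2 ≤ S (2 ^ (k + 1) + (2 * 2 ^ k - 1)) ^ 2 :=
            pow_le_pow_left₀ (hS0 _) h4 2
        _ ≤ _ := h3
        _ ≤ 2 * (2 * q ^ 3 * C₀ * (q ^ (k + 1))⁻¹) * (C₀ * (q ^ k)⁻¹) := by gcongr
        _ = _ := by field_simp; ring
  have hdy' : ∀ k : ℕ, S (2 ^ k) ≤ 2 * q ^ 3 * C₀ * (q ^ k)⁻¹ := by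
    intro k
    cases k with
    | zero =>
      have h5 : 1 ≤ q ^ 3 := one_le_pow₀ hq1
      simp only [pow_zero, inv_one, mul_one]
      nlinarith
    | succ k => exact hdy k
  intro n hn
  have hk1 : 2 ^ Nat.log 2 n ≤ n := Nat.pow_log_le_self 2 (by omega)
  have hk2 : n < 2 ^ (Nat.log 2 n + 1) := Nat.lt_pow_succ_log_self (by norm_num) n
  generalize Nat.log 2 n = k at hk1 hk2
  have h6 : (q ^ (k + 1))⁻¹ ≤ (n : ℝ) ^ (-α) := by
    rw [← hpow]
    exact Real.rpow_le_rpow_of_nonpos (by exact_mod_cast hn) (by exact_mod_cast hk2.le)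
      (by linarith)
  have h7 : (2 : ℝ) ^ (5 * α + 1) = 2 * q ^ 5 := by
    rw [Real.rpow_add (by norm_num), mul_comm 5 α, Real.rpow_mul (by norm_num), Real.rpow_one]
    rw [hq, mul_comm]
    norm_cast
  rw [h7]
  calc S n ≤ S (2 ^ k) := hanti hk1
    _ ≤ _ := hdy' k
    _ = 2 * q ^ 4 * C₀ * (q ^ (k + 1))⁻¹ := by field_simp; ring
    _ ≤ 2 * q ^ 5 * C₀ * (n : ℝ) ^ (-α) := by
      gcongr
      norm_num
end

section
/- Under the two-set greedy algorithm, if d_n(F) ≤ C₀ e^{−c₀ n^{α}} for all n = 1, 2, … for some constants C₀ > 0, c₀ > 0 and α > 0, then σ_n(F̃) ≤ √(2C₀) · e^{−c₁ n^{α}} for all n = 1, 2, …, where c₁ := 2^{−1−2α} c₀ < c₀. -/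
open Matrix
lemma det_ge_aux {k : ℕ} (A : Matrix (Fin k) (Fin k) ℝ) (hA : A.IsHermitian) (a : ℝ) (ha : 0 ≤ a)
    (h : ∀ x : Fin k → ℝ, a * (x ⬝ᵥ x) ≤ x ⬝ᵥ (A *ᵥ x)) : a ^ k ≤ A.det := by
  rw [hA.det_eq_prod_eigenvalues]
  have : ∀ i, a ≤ hA.eigenvalues i := by
    intro i
    have h1 := h (hA.eigenvectorBasis i)
    rw [hA.mulVec_eigenvectorBasis, dotProduct_smul] at h1
    have h2 : (hA.eigenvectorBasis i : Fin k → ℝ) ⬝ᵥ (hA.eigenvectorBasis i : Fin k → ℝ) = 1 := by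
      have := hA.eigenvectorBasis.orthonormal.1 i
      have h3 := real_inner_self_eq_norm_sq (hA.eigenvectorBasis i)
      rw [this] at h3
      rw [EuclideanSpace.inner_eq_star_dotProduct, star_trivial] at h3
      rw [h3]; norm_num
    rw [h2] at h1
    simpa using h1
  calc a ^ k = ∏ i : Fin k, a := by simp
    _ ≤ _ := Finset.prod_le_prod (fun _ _ => ha) (fun i _ => this i)

lemma det_le_aux {K : ℕ} (hK : 0 < K) (A : Matrix (Fin K) (Fin K) ℝ) (hA : A.PosSemidef) (t : ℝ)
    (ht : A.trace ≤ K * t) : A.det ≤ t ^ K := by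
  have hK' : (0:ℝ) < K := by exact_mod_cast hK
  have h1 := hA.1.det_eq_prod_eigenvalues
  have h2 := hA.1.trace_eq_sum_eigenvalues
  simp only [RCLike.ofReal_real_eq_id, id] at h1 h2
  have h3 := Real.geom_mean_le_arith_mean (Finset.univ) (fun _ : Fin K => (1:ℝ)) hA.1.eigenvalues
    (by simp) (by simpa using hK) (fun i _ => hA.eigenvalues_nonneg i)
  simp only [Real.rpow_one, one_mul, ← h1, ← h2, Finset.sum_const, Finset.card_univ, Fintype.card_fin, nsmul_eq_mul, mul_one] at h3
  have h4 : A.trace / K ≤ t := by rw [div_le_iff₀ hK']; linarith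
  have h0 : 0 ≤ A.det := by rw [h1]; exact Finset.prod_nonneg fun i _ => hA.eigenvalues_nonneg i
  calc A.det = (A.det ^ ((K:ℝ)⁻¹)) ^ K := by rw [Real.rpow_inv_natCast_pow h0 hK.ne']
    _ ≤ t ^ K := by gcongr; linarith

section aux
variable {H : Type*} [NormedAddCommGroup H] [InnerProductSpace ℝ H]
open scoped RealInnerProductSpace

lemma bessel_aux {n : ℕ} {u : Fin n → H} (hu : Orthonormal ℝ u) (x : H) :
    ∑ a, ⟪u a, x⟫ ^ 2 ≤ ‖x‖ ^ 2 := by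
  simpa using hu.sum_inner_products_le x (s := Finset.univ)

lemma norm_comb_aux {n : ℕ} {u : Fin n → H} (hu : Orthonormal ℝ u) (x : Fin n → ℝ) :
    ‖∑ a, x a • u a‖ ^ 2 = x ⬝ᵥ x := by
  rw [← real_inner_self_eq_norm_sq, hu.inner_sum]
  simp [dotProduct]

/-- for `R a i = ⟪u a, e i⟫`, `x ⬝ (1 - c R Rᵀ) x ≥ (1-c) x ⬝ x` -/
lemma quad_aux {n k : ℕ} {u : Fin k → H} (hu : Orthonormal ℝ u) {e : Fin n → H}
    (he : Orthonormal ℝ e) (c : ℝ) (hc : 0 ≤ c) (R : Matrix (Fin k) (Fin n) ℝ)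
    (hR : ∀ a i, R a i = ⟪u a, e i⟫) (x : Fin k → ℝ) :
    (1 - c) * (x ⬝ᵥ x) ≤ x ⬝ᵥ ((1 - c • (R * Rᵀ)) *ᵥ x) := by
  have h1 : x ⬝ᵥ ((R * Rᵀ) *ᵥ x) = ∑ i, ⟪e i, ∑ a, x a • u a⟫ ^ 2 := by
    rw [← mulVec_mulVec, dotProduct_mulVec, ← mulVec_transpose]
    simp only [dotProduct, mulVec, transpose_apply, hR, inner_sum, inner_smul_right, sq]
    refine Finset.sum_congr rfl fun i _ => ?_
    congr 1 <;> exact Finset.sum_congr rfl fun a _ => by rw [real_inner_comm, mul_comm]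
  have h2 := bessel_aux he (∑ a, x a • u a)
  rw [norm_comb_aux hu, ← h1] at h2
  rw [sub_mulVec, one_mulVec, smul_mulVec, dotProduct_sub, dotProduct_smul, smul_eq_mul]
  nlinarith

lemma core_aux {K k : ℕ} (hK : 0 < K) {u : Fin k → H} (hu : Orthonormal ℝ u) {e : Fin K → H}
    (he : Orthonormal ℝ e) (f : Fin K → H) (hfe : ∀ i, f i = ∑ j, ⟪e j, f i⟫ • e j)
    (htri : ∀ i j, i < j → ⟪e j, f i⟫ = 0) (hf : ∀ i, ‖f i‖ ≤ 1) (d : ℝ) (hd : 0 < d) (hd1 : d ≤ 1)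
    (hdist : ∀ i, ‖f i‖ ^ 2 - ∑ a, ⟪u a, f i⟫ ^ 2 ≤ d ^ 2) :
    (∏ i, ⟪e i, f i⟫) ^ 2 * (d ^ 2) ^ k ≤ (2 * d ^ 2) ^ K := by
  set c : ℝ := 1 - d ^ 2 with hc
  have hc0 : 0 ≤ c := by rw [hc]; nlinarith
  let L : Matrix (Fin K) (Fin K) ℝ := fun i j => ⟪e j, f i⟫
  let R : Matrix (Fin k) (Fin K) ℝ := fun a j => ⟪u a, e j⟫
  have hLdet : L.det = ∏ i, ⟪e i, f i⟫ := by
    apply det_of_isLowerTriangular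
    intro i j hij
    exact htri i j hij
  have hN' : (d ^ 2) ^ k ≤ (1 - c • (R * Rᵀ)).det := by
    apply det_ge_aux
    · simp [IsHermitian, conjTranspose_eq_transpose_of_trivial, transpose_sub, transpose_mul]
    · positivity
    · intro x
      have := quad_aux hu he c hc0 R (fun _ _ => rfl) x
      rwa [hc, sub_sub_cancel] at this
  have hNdet : (1 - c • (Rᵀ * R)).det = (1 - c • (R * Rᵀ)).det := by
    rw [← Matrix.smul_mul, det_one_sub_mul_comm, Matrix.mul_smul]
  have hNpsd : (1 - c • (Rᵀ * R)).PosSemidef := by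
    refine PosSemidef.of_dotProduct_mulVec_nonneg ?_ ?_
    · simp [IsHermitian, conjTranspose_eq_transpose_of_trivial, transpose_sub, transpose_mul]
    · intro x
      have := quad_aux he hu c hc0 Rᵀ (fun a i => real_inner_comm _ _) x
      rw [transpose_transpose, hc, sub_sub_cancel] at this
      have h0 : 0 ≤ x ⬝ᵥ x := by simpa using dotProduct_star_self_nonneg x
      rw [star_trivial]
      exact le_trans (by positivity) this
  have hM := hNpsd.mul_mul_conjTranspose_same L
  have hLR : ∀ i a, (L * Rᵀ) i a = ⟪u a, f i⟫ := by
    intro i a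
    conv_rhs => rw [hfe i]
    rw [mul_apply]
    simp only [inner_sum, inner_smul_right]
    rfl
  have hLL : ∀ i, (L * Lᵀ) i i = ‖f i‖ ^ 2 := by
    intro i
    conv_rhs => rw [hfe i, norm_comb_aux he]
    rw [mul_apply]
    rfl
  have htr : (L * (1 - c • (Rᵀ * R)) * Lᴴ).trace ≤ K * (2 * d ^ 2) := by
    have h1 : L * (1 - c • (Rᵀ * R)) * Lᴴ = L * Lᵀ - c • ((L * Rᵀ) * (L * Rᵀ)ᵀ) := by
      rw [conjTranspose_eq_transpose_of_trivial, transpose_mul, transpose_transpose]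
      simp only [Matrix.mul_sub, Matrix.sub_mul, Matrix.mul_one, Matrix.mul_smul, Matrix.smul_mul, Matrix.mul_assoc]
    rw [h1, trace]
    calc _ ≤ ∑ i : Fin K, (2 * d ^ 2) := by
          refine Finset.sum_le_sum fun i _ => ?_
          rw [diag_apply, Matrix.sub_apply, hLL, Matrix.smul_apply, mul_apply]
          simp only [transpose_apply, hLR, smul_eq_mul, ← sq]
          have h1 := hdist i
          have h2 := bessel_aux hu (f i)
          have h3 : ‖f i‖ ^ 2 ≤ 1 := pow_le_one₀ (norm_nonneg _) (hf i)
          rw [hc]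
          nlinarith [sq_nonneg d]
      _ = _ := by simp
  have := det_le_aux hK _ hM _ htr
  rw [det_mul, det_mul, conjTranspose_eq_transpose_of_trivial, det_transpose, hNdet, hLdet] at this
  calc _ ≤ (∏ i, ⟪e i, f i⟫) ^ 2 * (1 - c • (R * Rᵀ)).det := by gcongr
    _ ≤ _ := by linarith

lemma dist_aux (Y : Submodule ℝ H) [FiniteDimensional ℝ Y] {k : ℕ} (b : OrthonormalBasis (Fin k) ℝ Y)
    (g : H) (δ : ℝ) (h : Metric.infDist g (Y : Set H) ≤ δ) :
    ‖g‖ ^ 2 - ∑ a, ⟪((b a : Y) : H), g⟫ ^ 2 ≤ δ ^ 2 := by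
  have h1 : ‖g - Y.starProjection g‖ ≤ δ := by
    refine le_trans ?_ h
    rw [Metric.le_infDist ⟨0, Y.zero_mem⟩]
    intro y hy
    rw [Submodule.starProjection_minimal, dist_eq_norm]
    exact ciInf_le ⟨0, by rintro _ ⟨x, rfl⟩; positivity⟩ (⟨y, hy⟩ : Y)
  have h2 := Y.norm_sq_eq_add_norm_sq_starProjection g
  have h3 : ‖Y.starProjection g‖ ^ 2 = ∑ a, ⟪((b a : Y) : H), g⟫ ^ 2 := by
    have := b.sum_sq_norm_inner_right (Y.orthogonalProjectionOnto g)
    rw [Submodule.starProjection_apply, Submodule.norm_coe, ← this]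
    refine Finset.sum_congr rfl fun a _ => ?_
    rw [Submodule.inner_orthogonalProjectionOnto_eq_of_mem_left]
    simp
  have h4 : Yᗮ.starProjection g = g - Y.starProjection g := by
    rw [Submodule.starProjection_orthogonal_val]
  rw [h4, h3] at h2
  have := pow_le_pow_left₀ (norm_nonneg _) h1 2
  linarith

open InnerProductSpace in
lemma greedy_aux (f : ℕ → H) (hf : ∀ i, ‖f i‖ ≤ 1) (m : ℕ) (hm : 1 ≤ m) (s : ℝ) (hs : 0 < s)
    (hsi : ∀ i < 2 * m, s ≤ Metric.infDist (f i) ((Submodule.span ℝ (f '' Set.Iio i) : Submodule ℝ H) : Set H))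
    (Y : Submodule ℝ H) (hY : Module.rank ℝ Y ≤ m) (d : ℝ) (hd : 0 < d) (hd1 : d ≤ 1)
    (hdist : ∀ i, Metric.infDist (f i) (Y : Set H) ≤ d) : s ^ 2 ≤ 2 * d := by
  have hfin : FiniteDimensional ℝ Y :=
    Module.rank_lt_aleph0_iff.mp (hY.trans_lt (Cardinal.natCast_lt_aleph0))
  have hk : Module.finrank ℝ Y ≤ m := Module.finrank_le_of_rank_le hY
  have hgs : ∀ i < 2 * m, s ≤ ‖gramSchmidt ℝ f i‖ := by
    intro i hi
    refine (hsi i hi).trans ?_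
    have hmem : f i - gramSchmidt ℝ f i ∈ Submodule.span ℝ (f '' Set.Iio i) := by
      rw [← span_gramSchmidt_Iio ℝ f i, gramSchmidt_def, sub_sub_cancel]
      simp_rw [Submodule.starProjection_singleton]
      exact Submodule.sum_mem _ fun j hj => Submodule.smul_mem _ _
        (Submodule.subset_span ⟨j, Finset.mem_Iio.1 hj, rfl⟩)
    refine (Metric.infDist_le_dist_of_mem hmem).trans ?_
    rw [dist_eq_norm, sub_sub_cancel]
  have hgs0 : ∀ i < 2 * m, ‖gramSchmidt ℝ f i‖ ≠ 0 := fun i hi => (hs.trans_le (hgs i hi)).ne'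
  let e : Fin (2 * m) → H := fun i => gramSchmidtNormed ℝ f i
  have he : Orthonormal ℝ e := by
    constructor
    · intro i
      have := hgs0 i i.2
      simp [e, gramSchmidtNormed, norm_smul, this]
    · intro i j hij
      have : (i : ℕ) ≠ j := fun h => hij (Fin.ext h)
      simp [e, gramSchmidtNormed, inner_smul_left, inner_smul_right, gramSchmidt_orthogonal ℝ f this]
  have htri : ∀ i j : Fin (2 * m), i < j → ⟪e j, f i⟫ = 0 := by
    intro i j hij
    have : (i : ℕ) < j := hij
    simp [e, gramSchmidtNormed, inner_smul_left, gramSchmidt_inv_triangular ℝ f this]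
  have hself : ∀ i : ℕ, ⟪gramSchmidt ℝ f i, f i⟫ = ‖gramSchmidt ℝ f i‖ ^ 2 := by
    intro i
    conv_lhs => rw [gramSchmidt_def'' ℝ f i]
    rw [inner_add_right, real_inner_self_eq_norm_sq, inner_sum, Finset.sum_eq_zero, add_zero]
    intro j hj
    rw [inner_smul_right, gramSchmidt_orthogonal ℝ f (Finset.mem_Iio.1 hj).ne', mul_zero]
  have hdiag : ∀ i : Fin (2 * m), ⟪e i, f i⟫ = ‖gramSchmidt ℝ f i‖ := by
    intro i
    have := hgs0 i i.2
    simp only [e, gramSchmidtNormed, inner_smul_left, hself]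
    simp
    field_simp
  have hfspan : ∀ i : Fin (2 * m), f i ∈ Submodule.span ℝ (Set.range e) := by
    intro i
    have h1 := mem_span_gramSchmidt ℝ f (le_refl (i : ℕ))
    rw [← span_gramSchmidtNormed] at h1
    refine Submodule.span_mono ?_ h1
    rintro _ ⟨j, hj, rfl⟩
    exact ⟨⟨j, lt_of_le_of_lt hj i.2⟩, rfl⟩
  have hexp : ∀ x ∈ Submodule.span ℝ (Set.range e), x = ∑ j, ⟪e j, x⟫ • e j := by
    intro x hx
    obtain ⟨c, rfl⟩ := (Submodule.mem_span_range_iff_exists_fun ℝ).1 hx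
    refine Finset.sum_congr rfl fun j _ => ?_
    rw [he.inner_right_fintype]
  let b := stdOrthonormalBasis ℝ Y
  have hu : Orthonormal ℝ (fun a => ((b a : Y) : H)) := by
    have := b.orthonormal.comp_linearIsometry Y.subtypeₗᵢ
    exact this
  have key := core_aux (by omega : 0 < 2 * m) hu he (fun i => f i) (fun i => hexp _ (hfspan i)) htri
    (fun i => hf i) d hd hd1 (fun i => dist_aux Y b (f i) d (hdist i))
  have hprod : s ^ (2 * m) ≤ ∏ i : Fin (2 * m), ⟪e i, f i⟫ := by
    calc s ^ (2 * m) = ∏ i : Fin (2 * m), s := by simp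
      _ ≤ _ := Finset.prod_le_prod (fun _ _ => hs.le) (fun i _ => by rw [hdiag]; exact hgs i i.2)
  have hdk : (d ^ 2) ^ m ≤ (d ^ 2) ^ (Module.finrank ℝ Y) :=
    pow_le_pow_of_le_one (by positivity) (pow_le_one₀ hd.le hd1) hk
  have h1 : (s ^ (2 * m)) ^ 2 * (d ^ 2) ^ m ≤ (2 * d ^ 2) ^ (2 * m) := by
    refine le_trans ?_ key
    gcongr
  have h2 : (s ^ 2) ^ (2 * m) * d ^ (2 * m) ≤ (2 * d) ^ (2 * m) * d ^ (2 * m) := by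
    rw [← mul_pow (2 * d)]
    calc _ = (s ^ (2 * m)) ^ 2 * (d ^ 2) ^ m := by rw [← pow_mul, ← pow_mul, ← pow_mul, mul_comm 2 (2 * m)]
      _ ≤ _ := h1
      _ = _ := by ring
  have h3 := le_of_mul_le_mul_right h2 (by positivity)
  exact le_of_pow_le_pow_left₀ (by omega) (by positivity) h3

lemma infDist_le_one_aux (g : H) (hg : ‖g‖ ≤ 1) (Y : Submodule ℝ H) :
    Metric.infDist g (Y : Set H) ≤ 1 := by
  refine (Metric.infDist_le_dist_of_mem (Y.zero_mem)).trans ?_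
  simpa using hg

end aux



/-- Two-set greedy algorithm: exponential decay of the Kolmogorov widths
`d_n(F) ≤ C₀ e^{-c₀ n^α}` implies `σ_n(F̃) ≤ √(2C₀) e^{-c₁ n^α}` with
`c₁ = 2^{-1-2α} c₀ < c₀`, for all `n ≥ 1`. -/
theorem two_set_greedy_exponential_decay
    {H : Type*} [NormedAddCommGroup H] [InnerProductSpace ℝ H]
    (F Ftil : Set H) (hsub : Ftil ⊆ F) (hcomp : IsCompact F)
    (hbound : ∀ f ∈ F, ‖f‖ ≤ 1)
    (f : ℕ → H) (hmem : ∀ n, f n ∈ Ftil)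
    (hgreedy : ∀ n : ℕ,
      Metric.infDist (f n) ((Submodule.span ℝ (f '' Set.Iio n) : Submodule ℝ H) : Set H)
        = ⨆ g : Ftil, Metric.infDist (g : H)
            ((Submodule.span ℝ (f '' Set.Iio n) : Submodule ℝ H) : Set H))
    (C₀ c₀ α : ℝ) (hC₀ : 0 < C₀) (hc₀ : 0 < c₀) (hα : 0 < α)
    (hd : ∀ n : ℕ, 1 ≤ n →
      (⨅ Y : {Y : Submodule ℝ H // Module.rank ℝ Y ≤ n},
          ⨆ g : F, Metric.infDist (g : H) ((Y : Submodule ℝ H) : Set H))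
        ≤ C₀ * Real.exp (-c₀ * (n : ℝ) ^ α)) :
    ((2 : ℝ) ^ (-1 - 2 * α) * c₀ < c₀) ∧
    ∀ n : ℕ, 1 ≤ n →
      (⨆ g : Ftil, Metric.infDist (g : H)
          ((Submodule.span ℝ (f '' Set.Iio n) : Submodule ℝ H) : Set H))
        ≤ Real.sqrt (2 * C₀) * Real.exp (-((2 : ℝ) ^ (-1 - 2 * α) * c₀) * (n : ℝ) ^ α) := by
  have h2a : (2 : ℝ) ^ (-1 - 2 * α) < 1 :=
    Real.rpow_lt_one_of_one_lt_of_neg (by norm_num) (by linarith)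
  refine ⟨by nlinarith, ?_⟩
  intro n hn
  obtain ⟨m, hm1, hmn, hnm⟩ : ∃ m : ℕ, 1 ≤ m ∧ 2 * m ≤ n + 1 ∧ n ≤ 2 * m :=
    ⟨(n + 1) / 2, by omega, by omega, by omega⟩
  have hfF : ∀ i, f i ∈ F := fun i => hsub (hmem i)
  have hf1 : ∀ i, ‖f i‖ ≤ 1 := fun i => hbound _ (hfF i)
  have hbdd : ∀ (S : Set H), S ⊆ F → ∀ Y : Submodule ℝ H,
      BddAbove (Set.range fun g : S => Metric.infDist (g : H) (Y : Set H)) := by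
    intro S hS Y
    refine ⟨1, ?_⟩
    rintro _ ⟨g, rfl⟩
    exact infDist_le_one_aux _ (hbound _ (hS g.2)) Y
  rw [← hgreedy n]
  set s := Metric.infDist (f n) ((Submodule.span ℝ (f '' Set.Iio n) : Submodule ℝ H) : Set H) with hsdef
  have hs0 : 0 ≤ s := Metric.infDist_nonneg
  have hs1 : s ≤ 1 := infDist_le_one_aux _ (hf1 n) _
  have hsi : ∀ i < 2 * m, s ≤ Metric.infDist (f i)
      ((Submodule.span ℝ (f '' Set.Iio i) : Submodule ℝ H) : Set H) := by
    intro i hi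
    rw [hgreedy i]
    have hle : Submodule.span ℝ (f '' Set.Iio i) ≤ Submodule.span ℝ (f '' Set.Iio n) :=
      Submodule.span_mono (Set.image_mono (Set.Iio_subset_Iio (by omega)))
    refine le_trans (Metric.infDist_le_infDist_of_subset hle ⟨0, Submodule.zero_mem _⟩) ?_
    exact le_ciSup (hbdd Ftil hsub _) (⟨f n, hmem n⟩ : Ftil)
  set D := C₀ * Real.exp (-c₀ * (m : ℝ) ^ α) with hD
  have hD0 : 0 < D := by positivity
  have hsD : s ^ 2 ≤ 2 * D := by
    have : ∀ δ, D < δ → s ^ 2 / 2 ≤ δ := by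
      intro δ hδ
      have hδ0 : 0 < δ := hD0.trans hδ
      rcases hs0.eq_or_lt with h0 | hspos
      · rw [← h0]; norm_num; exact hδ0.le
      rcases le_or_gt δ 1 with h1 | h1
      · have : Nonempty {Y : Submodule ℝ H // Module.rank ℝ Y ≤ m} := ⟨⟨⊥, by simp⟩⟩
        obtain ⟨Y, hY⟩ := exists_lt_of_ciInf_lt ((hd m hm1).trans_lt hδ)
        have := greedy_aux f hf1 m hm1 s hspos hsi Y.1 Y.2 δ hδ0 h1 (fun i =>
          (le_ciSup (hbdd F subset_rfl Y.1) (⟨f i, hfF i⟩ : F)).trans hY.le)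
        linarith
      · nlinarith
    have := le_of_forall_gt_imp_ge_of_dense this
    linarith
  have hexp : D ≤ C₀ * Real.exp (-((2 : ℝ) ^ (-1 - 2 * α) * c₀) * (n : ℝ) ^ α) ^ 2 := by
    rw [hD, ← Real.exp_nat_mul]
    refine mul_le_mul_of_nonneg_left (Real.exp_le_exp.2 ?_) hC₀.le
    have hn2 : (n : ℝ) ^ α ≤ 2 ^ α * (m : ℝ) ^ α := by
      rw [← Real.mul_rpow (by norm_num) (by positivity)]
      apply Real.rpow_le_rpow (by positivity) _ hα.le
      exact_mod_cast hnm
    have hpw : (2 : ℝ) ^ (-1 - 2 * α) * 2 ^ α ≤ 1 / 2 := by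
      rw [← Real.rpow_add (by norm_num)]
      calc (2 : ℝ) ^ (-1 - 2 * α + α) ≤ 2 ^ (-1 : ℝ) :=
            Real.rpow_le_rpow_of_exponent_le (by norm_num) (by linarith)
        _ = 1 / 2 := by rw [Real.rpow_neg_one]; norm_num
    have hp : (2 : ℝ) ^ (-1 - 2 * α) * (n : ℝ) ^ α ≤ 1 / 2 * (m : ℝ) ^ α := by
      calc _ ≤ (2 : ℝ) ^ (-1 - 2 * α) * (2 ^ α * (m : ℝ) ^ α) := by gcongr
        _ = ((2 : ℝ) ^ (-1 - 2 * α) * 2 ^ α) * (m : ℝ) ^ α := by ring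
        _ ≤ _ := by gcongr
    push_cast
    nlinarith
  refine (sq_le_sq₀ hs0 (by positivity)).1 ?_
  rw [mul_pow, Real.sq_sqrt (by positivity)]
  linarith
end

section
/- Under the two-set greedy algorithm, if d_n(F) ≤ C₀ e^{−c₀ log(n) n^{α}} for all n = 1, 2, … for some constants C₀ > 0, c₀ > 0 and α > 0, then σ_n(F̃) ≤ √(2C₀) · e^{−c̃₁ log(n) n^{α}} for all n = 2, 3, …, where c̃₁ := 2^{−2−2α} c₀ < c₀. -/
open Matrix in
lemma aux_det_gram {H : Type*} [NormedAddCommGroup H] [InnerProductSpace ℝ H] {K : ℕ}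
    (v : Fin K → H) :
    (gram ℝ v).det = ∏ i, ‖InnerProductSpace.gramSchmidt ℝ v i‖ ^ 2 := by
  set e := InnerProductSpace.gramSchmidt ℝ v with he
  set L : Matrix (Fin K) (Fin K) ℝ := Matrix.of fun i j =>
    if j < i then inner ℝ (e j) (v i) / ‖e j‖ ^ 2 else if j = i then 1 else 0 with hL
  have hv : ∀ i, v i = ∑ j, L i j • e j := by
    intro i
    have h := InnerProductSpace.gramSchmidt_def'' ℝ v i
    rw [← he] at h
    have h2 : ∀ j, L i j • e j = (if j < i then (inner ℝ (e j) (v i) / ‖e j‖ ^ 2) • e j else 0)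
        + (if j = i then e j else 0) := by
      intro j
      simp only [hL, Matrix.of_apply]
      by_cases h1 : j < i
      · simp [h1, h1.ne]
      · by_cases h3 : j = i <;> simp [h1, h3]
    simp_rw [h2, Finset.sum_add_distrib]
    rw [← Finset.sum_filter]
    have h3 : (Finset.univ.filter (fun j => j < i)) = Finset.Iio i := by ext; simp
    rw [h3]
    simp only [Finset.sum_ite_eq', Finset.mem_univ, if_true]
    rw [add_comm]
    exact h
  have hG : gram ℝ v = L * diagonal (fun i => ‖e i‖ ^ 2) * Lᵀ := by
    ext i k
    rw [gram_apply, hv i, hv k, sum_inner, Matrix.mul_apply]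
    refine Finset.sum_congr rfl fun j _ => ?_
    rw [inner_sum, Finset.sum_eq_single j]
    · rw [inner_smul_left, inner_smul_right, real_inner_self_eq_norm_sq, Matrix.mul_diagonal]
      simp [Matrix.transpose_apply]; ring
    · intro l _ hl
      rw [inner_smul_left, inner_smul_right, he,
        InnerProductSpace.gramSchmidt_orthogonal ℝ v hl.symm]
      simp
    · simp
  have hdet : L.det = 1 := by
    rw [Matrix.det_of_isLowerTriangular L]
    · simp [hL]
    · intro i j hij
      have : i < j := hij
      simp [hL, this.not_gt, this.ne']
  rw [hG, det_mul, det_mul, det_transpose, hdet, det_diagonal]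
  simp

lemma aux_sum_norm {H : Type*} [NormedAddCommGroup H] [InnerProductSpace ℝ H] {K : ℕ}
    (b : OrthonormalBasis (Fin K) ℝ (EuclideanSpace ℝ (Fin K))) (u : Fin K → H) :
    ∑ i, ‖∑ j, b i j • u j‖ ^ 2 = ∑ j, ‖u j‖ ^ 2 := by
  have hδ : ∀ j k, ∑ i, b i j * b i k = if j = k then 1 else 0 := by
    intro j k
    have h := b.sum_inner_mul_inner (EuclideanSpace.single j (1:ℝ)) (EuclideanSpace.single k (1:ℝ))
    simpa [EuclideanSpace.inner_single_left, EuclideanSpace.inner_single_right, eq_comm] using h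
  have h1 : ∀ i, ‖∑ j, b i j • u j‖ ^ 2 = ∑ j, ∑ k, (b i j * b i k) * inner ℝ (u j) (u k) := by
    intro i
    rw [← real_inner_self_eq_norm_sq, sum_inner]
    refine Finset.sum_congr rfl fun j _ => ?_
    rw [inner_sum]
    refine Finset.sum_congr rfl fun k _ => ?_
    rw [inner_smul_left, inner_smul_right]; simp; ring
  simp_rw [h1]
  rw [Finset.sum_comm]
  refine Finset.sum_congr rfl fun j _ => ?_
  rw [Finset.sum_comm]
  simp_rw [← Finset.sum_mul, hδ]
  simp

lemma aux_bessel {H : Type*} [NormedAddCommGroup H] [InnerProductSpace ℝ H] {K : ℕ}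
    (g : Fin K → H) (hg : Orthonormal ℝ g) (Y : Submodule ℝ H) [FiniteDimensional ℝ Y] :
    ∑ i, ‖Y.starProjection (g i)‖ ^ 2 ≤ Module.finrank ℝ Y := by
  have y := stdOrthonormalBasis ℝ Y
  have h1 : ∀ i, ‖Y.starProjection (g i)‖ ^ 2 = ∑ k, (inner ℝ (y k : H) (g i)) ^ 2 := by
    intro i
    have h := y.sum_sq_norm_inner_right (Y.orthogonalProjectionOnto (g i))
    rw [Submodule.starProjection_apply, ← Submodule.coe_norm, ← h]
    refine Finset.sum_congr rfl fun k _ => ?_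
    rw [Submodule.inner_orthogonalProjectionOnto_eq_of_mem_left, Real.norm_eq_abs, sq_abs]
  simp_rw [h1]
  rw [Finset.sum_comm]
  calc _ ≤ ∑ k : Fin (Module.finrank ℝ Y), (1:ℝ) := by
        refine Finset.sum_le_sum fun k _ => ?_
        have := hg.sum_inner_products_le (s := Finset.univ) (y k : H)
        have h2 : ‖(y k : H)‖ = 1 := by
          rw [← Submodule.coe_norm]; exact y.orthonormal.1 k
        rw [h2] at this
        simpa [real_inner_comm, sq_abs] using this
    _ = _ := by simp

open Matrix in
lemma aux_core {H : Type*} [NormedAddCommGroup H] [InnerProductSpace ℝ H] {K : ℕ}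
    (v : Fin K → H) (hpos : ∀ i, InnerProductSpace.gramSchmidt ℝ v i ≠ 0) :
    ∃ l : Fin K → ℝ, (∀ i, 0 < l i) ∧
      ∏ i, l i = ∏ i, ‖InnerProductSpace.gramSchmidt ℝ v i‖ ^ 2 ∧
      ∑ i, l i = ∑ i, ‖v i‖ ^ 2 ∧
      ∀ (Y : Submodule ℝ H) (m : ℕ) (d : ℝ), Module.rank ℝ Y ≤ m →
        (∀ i, Metric.infDist (v i) (Y : Set H) ≤ d) →
        ∃ p : Fin K → ℝ, (∀ i, 0 ≤ p i) ∧ (∀ i, p i ≤ 1) ∧ ∑ i, p i ≤ m ∧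
          ∑ i, l i * (1 - p i) ≤ K * d ^ 2 := by
  have hG := isHermitian_gram ℝ v
  have hprod : ∏ i, hG.eigenvalues i = ∏ i, ‖InnerProductSpace.gramSchmidt ℝ v i‖ ^ 2 := by
    rw [← aux_det_gram, hG.det_eq_prod_eigenvalues]; simp
  have hne : ∏ i, hG.eigenvalues i ≠ 0 := by
    rw [hprod, Finset.prod_ne_zero_iff]
    intro i _
    exact pow_ne_zero _ (norm_ne_zero_iff.2 (hpos i))
  have hlpos : ∀ i, 0 < hG.eigenvalues i := fun i =>
    lt_of_le_of_ne ((posSemidef_gram ℝ v).eigenvalues_nonneg i)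
      (Ne.symm (Finset.prod_ne_zero_iff.1 hne i (Finset.mem_univ i)))
  set l := hG.eigenvalues with hl
  set b := hG.eigenvectorBasis with hb
  set g : Fin K → H := fun i => ∑ j, b i j • v j with hg
  have hgg : ∀ i k, inner ℝ (g i) (g k) = if i = k then l k else 0 := by
    intro i k
    have h := star_dotProduct_gram_mulVec (𝕜 := ℝ) v (b i) (b k)
    rw [hb, hG.mulVec_eigenvectorBasis, ← hb] at h
    have h2 := orthonormal_iff_ite.1 b.orthonormal i k
    rw [hg]; dsimp only; rw [← h, dotProduct_smul]
    have h3 : star (b i : Fin K → ℝ) ⬝ᵥ (b k) = inner ℝ (b i) (b k) := by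
      rw [PiLp.inner_apply]; simp [dotProduct, mul_comm]
    rw [h3, h2]; simp [hl]
  have hgn : ∀ i, ‖g i‖ ^ 2 = l i := by
    intro i; rw [← real_inner_self_eq_norm_sq, hgg]; simp
  refine ⟨l, hlpos, hprod, ?_, ?_⟩
  · simp_rw [← hgn]; exact aux_sum_norm b v
  intro Y m d hr hd
  have hfin : FiniteDimensional ℝ Y :=
    Module.rank_lt_aleph0_iff.1 (hr.trans_lt (Cardinal.natCast_lt_aleph0))
  have hfr : Module.finrank ℝ Y ≤ m := Module.finrank_le_of_rank_le hr
  set e : Fin K → H := fun i => (Real.sqrt (l i))⁻¹ • g i with he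
  have heo : Orthonormal ℝ e := by
    rw [orthonormal_iff_ite]
    intro i k
    simp only [he, inner_smul_left, inner_smul_right, hgg]
    split_ifs with h
    · subst h
      have := Real.mul_self_sqrt (hlpos i).le
      have h0 := (Real.sqrt_pos.2 (hlpos i)).ne'
      simp only [conj_trivial]
      field_simp
      nlinarith
    · simp
  have hge : ∀ i, g i = Real.sqrt (l i) • e i := by
    intro i
    simp only [he]
    rw [smul_inv_smul₀ (Real.sqrt_pos.2 (hlpos i)).ne']
  clear_value e
  have hpy : ∀ x : H, ‖x‖ ^ 2 = ‖Y.starProjection x‖ ^ 2 + ‖x - Y.starProjection x‖ ^ 2 := by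
    intro x
    have h := norm_add_sq_eq_norm_sq_add_norm_sq_of_inner_eq_zero (𝕜 := ℝ) (Y.starProjection x) (x - Y.starProjection x)
      (by
        rw [real_inner_comm]
        exact Submodule.starProjection_inner_eq_zero x _ (Submodule.starProjection_apply_mem Y x))
    rw [add_sub_cancel] at h
    nlinarith
  refine ⟨fun i => ‖Y.starProjection (e i)‖ ^ 2, fun i => by positivity, ?_, ?_, ?_⟩
  · intro i
    have := hpy (e i)
    rw [heo.1 i] at this
    nlinarith [sq_nonneg ‖e i - Y.starProjection (e i)‖]
  · exact (aux_bessel e heo Y).trans (by exact_mod_cast hfr)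
  · have h1 : ∀ i, l i * (1 - ‖Y.starProjection (e i)‖ ^ 2)
        = ‖∑ j, b i j • (v j - Y.starProjection (v j))‖ ^ 2 := by
      intro i
      have h2 : ∑ j, b i j • (v j - Y.starProjection (v j)) = g i - Y.starProjection (g i) := by
        simp only [hg, map_sum, map_smul, smul_sub, Finset.sum_sub_distrib]
      have h3 := hpy (e i)
      rw [heo.1 i] at h3
      rw [h2, hge i, map_smul, ← smul_sub, norm_smul, mul_pow, Real.norm_eq_abs, sq_abs,
        Real.sq_sqrt (hlpos i).le]
      congr 1; linarith
    simp_rw [h1]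
    rw [aux_sum_norm]
    calc _ ≤ ∑ j : Fin K, d ^ 2 := by
          refine Finset.sum_le_sum fun j _ => ?_
          have h4 := hd j
          have h5 : ‖v j - Y.starProjection (v j)‖ ≤ Metric.infDist (v j) (Y : Set H) := by
            rw [Submodule.starProjection_minimal, Metric.infDist_eq_iInf]
            simp only [dist_eq_norm]; exact le_rfl
          gcongr
          exact h5.trans h4
      _ = _ := by simp

lemma aux_general {H : Type*} [NormedAddCommGroup H] [InnerProductSpace ℝ H] {m : ℕ} (hm : 1 ≤ m)
    (v : Fin (2 * m) → H) (s d : ℝ) (hs0 : 0 ≤ s) (hs1 : s ≤ 1) (hd0 : 0 < d)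
    (hs : ∀ i, s ≤ ‖InnerProductSpace.gramSchmidt ℝ v i‖) (hv : ∀ i, ‖v i‖ ≤ 1)
    (Y : Submodule ℝ H) (hr : Module.rank ℝ Y ≤ m)
    (hd : ∀ i, Metric.infDist (v i) (Y : Set H) ≤ d) : s ^ 2 ≤ 2 * d := by
  rcases hs0.eq_or_lt with h0 | hspos
  · rw [← h0]; nlinarith
  rcases le_total 1 d with hd1 | hd1
  · nlinarith
  obtain ⟨l, hl, hprod, hsum, hY⟩ := aux_core v (fun i h => by
    have := hs i; rw [h, norm_zero] at this; linarith)
  obtain ⟨p, hp0, hp1, hpm, hp⟩ := hY Y m d hr hd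
  have hK : ((2 * m : ℕ) : ℝ) = 2 * m := by push_cast; rfl
  rw [hK] at hp
  have hsum' : ∑ i, l i ≤ 2 * m := by
    rw [hsum]
    calc _ ≤ ∑ i : Fin (2 * m), (1:ℝ) :=
          Finset.sum_le_sum fun i _ => pow_le_one₀ (norm_nonneg _) (hv i)
      _ = _ := by simp
  have hlp : ∑ i, l i * p i ≤ 2 * m :=
    (Finset.sum_le_sum fun i _ => mul_le_of_le_one_right (hl i).le (hp1 i)).trans hsum'
  set w : Fin (2 * m) → ℝ := fun i => p i * d + (1 - p i) * d⁻¹ with hw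
  have hw1 : ∀ i, d ^ (2 * p i - 1) ≤ w i := by
    intro i
    have h := Real.geom_mean_le_arith_mean2_weighted (hp0 i) (sub_nonneg.2 (hp1 i)) hd0.le
      (inv_pos.2 hd0).le (by ring)
    refine le_trans (le_of_eq ?_) h
    rw [Real.inv_rpow hd0.le, ← Real.rpow_neg hd0.le, ← Real.rpow_add hd0]
    congr 1; ring
  have hwprod : 1 ≤ ∏ i, w i := by
    calc (1:ℝ) ≤ d ^ (∑ i, (2 * p i - 1)) := by
          apply Real.one_le_rpow_of_pos_of_le_one_of_nonpos hd0 hd1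
          rw [Finset.sum_sub_distrib, ← Finset.mul_sum]
          simp; linarith
      _ = ∏ i, d ^ (2 * p i - 1) := Real.rpow_sum_of_pos hd0 _ _
      _ ≤ _ := Finset.prod_le_prod (fun i _ => (Real.rpow_pos_of_pos hd0 _).le) fun i _ => hw1 i
  have hzsum : ∑ i, l i * w i ≤ 2 * d * (2 * m) := by
    have h1 : ∑ i, l i * w i = d * ∑ i, l i * p i + d⁻¹ * ∑ i, l i * (1 - p i) := by
      rw [Finset.mul_sum, Finset.mul_sum, ← Finset.sum_add_distrib]
      refine Finset.sum_congr rfl fun i _ => ?_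
      simp only [hw]; ring
    rw [h1]
    have h2 : d⁻¹ * ∑ i, l i * (1 - p i) ≤ d⁻¹ * (2 * m * d ^ 2) :=
      mul_le_mul_of_nonneg_left hp (inv_pos.2 hd0).le
    have h3 : d⁻¹ * (2 * m * d ^ 2) = 2 * m * d := by field_simp
    nlinarith
  have hw0 : ∀ i, 0 ≤ w i := fun i => (Real.rpow_pos_of_pos hd0 _).le.trans (hw1 i)
  have hzprod : ∏ i, l i * w i ≤ (2 * d) ^ (2 * m) := by
    have h1 : ∀ i, l i * w i ≤ (2 * d) * Real.exp (l i * w i / (2 * d) - 1) := by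
      intro i
      have := Real.add_one_le_exp (l i * w i / (2 * d) - 1)
      calc l i * w i = (2 * d) * (l i * w i / (2 * d) - 1 + 1) := by field_simp; ring
        _ ≤ _ := by gcongr
    calc _ ≤ ∏ i, (2 * d) * Real.exp (l i * w i / (2 * d) - 1) :=
          Finset.prod_le_prod (fun i _ => mul_nonneg (hl i).le (hw0 i)) fun i _ => h1 i
      _ = (2 * d) ^ (2 * m) * Real.exp (∑ i, (l i * w i / (2 * d) - 1)) := by
          rw [Finset.prod_mul_distrib, Real.exp_sum]; simp
      _ ≤ (2 * d) ^ (2 * m) * 1 := by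
          gcongr
          rw [Real.exp_le_one_iff, Finset.sum_sub_distrib, ← Finset.sum_div]
          simp only [Finset.sum_const, Finset.card_univ, Fintype.card_fin, nsmul_eq_mul, hK, mul_one]
          rw [sub_nonpos, div_le_iff₀ (by positivity)]
          linarith
      _ = _ := mul_one _
  have hfin : (s ^ 2) ^ (2 * m) ≤ (2 * d) ^ (2 * m) := by
    calc (s ^ 2) ^ (2 * m) = ∏ i : Fin (2 * m), s ^ 2 := by simp
      _ ≤ ∏ i, ‖InnerProductSpace.gramSchmidt ℝ v i‖ ^ 2 :=
          Finset.prod_le_prod (fun i _ => by positivity) fun i _ => by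
            gcongr; exact hs i
      _ = ∏ i, l i := hprod.symm
      _ ≤ (∏ i, l i) * ∏ i, w i := le_mul_of_one_le_right
          (Finset.prod_nonneg fun i _ => (hl i).le) hwprod
      _ = ∏ i, l i * w i := Finset.prod_mul_distrib.symm
      _ ≤ _ := hzprod
  exact le_of_pow_le_pow_left₀ (by omega) (by positivity) hfin

lemma aux_sort (l : Fin 3 → ℝ) (hl : ∀ i, 0 < l i) : ∃ a b c : ℝ, 0 < a ∧ 0 < b ∧ 0 < c ∧
    ∏ i, l i = a * b * c ∧ ∑ i, l i = a + b + c ∧ (∀ i, l i ≤ a) ∧ ∀ i, c ≤ l i := by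
  have key : ∀ e : Equiv.Perm (Fin 3), (l (e 1) ≤ l (e 0)) → (l (e 2) ≤ l (e 1)) →
      ∃ a b c : ℝ, 0 < a ∧ 0 < b ∧ 0 < c ∧
    ∏ i, l i = a * b * c ∧ ∑ i, l i = a + b + c ∧ (∀ i, l i ≤ a) ∧ ∀ i, c ≤ l i := by
    intro e h1 h2
    refine ⟨l (e 0), l (e 1), l (e 2), hl _, hl _, hl _, ?_, ?_, ?_, ?_⟩
    · rw [← Equiv.prod_comp e, Fin.prod_univ_three]
    · rw [← Equiv.sum_comp e, Fin.sum_univ_three]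
    · intro i
      obtain ⟨j, rfl⟩ := e.surjective i
      fin_cases j
      · exact le_rfl
      · exact h1
      · exact h2.trans h1
    · intro i
      obtain ⟨j, rfl⟩ := e.surjective i
      fin_cases j
      · exact h2.trans h1
      · exact h2
      · exact le_rfl
  have hmono := Tuple.monotone_sort l
  have hm2 : ∀ i j, i ≤ j → l (Tuple.sort l i) ≤ l (Tuple.sort l j) := fun i j h => hmono h
  refine key ((Equiv.swap 0 2).trans (Tuple.sort l)) ?_ ?_
  · exact hm2 1 2 (by decide)
  · exact hm2 0 1 (by decide)

lemma aux_three {H : Type*} [NormedAddCommGroup H] [InnerProductSpace ℝ H]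
    (v : Fin 3 → H) (s d e : ℝ) (hs0 : 0 ≤ s) (hd0 : 0 < d) (he0 : 0 < e)
    (hs : ∀ i, s ≤ ‖InnerProductSpace.gramSchmidt ℝ v i‖) (hv : ∀ i, ‖v i‖ ≤ 1)
    (Y : Submodule ℝ H) (hr : Module.rank ℝ Y ≤ (1 : ℕ))
    (hd : ∀ i, Metric.infDist (v i) (Y : Set H) ≤ d)
    (Z : Submodule ℝ H) (hrZ : Module.rank ℝ Z ≤ (2 : ℕ))
    (he : ∀ i, Metric.infDist (v i) (Z : Set H) ≤ e) : s ^ 4 ≤ 4 * (d * e) := by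
  rcases hs0.eq_or_lt with h0 | hspos
  · rw [← h0]; norm_num; positivity
  obtain ⟨l, hl, hprod, hsum, hY⟩ := aux_core v (fun i h => by
    have := hs i; rw [h, norm_zero] at this; linarith)
  obtain ⟨p, hp0, hp1, hpm, hp⟩ := hY Y 1 d hr hd
  obtain ⟨q, hq0, hq1, hqm, hq⟩ := hY Z 2 e hrZ he
  obtain ⟨a, b, c, ha, hb, hc, hpr, hsm, hmax, hmin⟩ := aux_sort l hl
  have hsum' : a + b + c ≤ 3 := by
    rw [← hsm, hsum]
    calc _ ≤ ∑ i : Fin 3, (1:ℝ) :=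
          Finset.sum_le_sum fun i _ => pow_le_one₀ (norm_nonneg _) (hv i)
      _ = _ := by simp
  push_cast at hp hq hpm hqm
  have hbc : b + c ≤ 3 * d ^ 2 := by
    have h1 : ∑ i, l i * p i ≤ a * ∑ i, p i := by
      rw [Finset.mul_sum]
      exact Finset.sum_le_sum fun i _ => mul_le_mul_of_nonneg_right (hmax i) (hp0 i)
    simp_rw [mul_sub, mul_one, Finset.sum_sub_distrib] at hp
    nlinarith
  have hcc : c ≤ 3 * e ^ 2 := by
    have h1 : c * ∑ i, (1 - q i) ≤ ∑ i, l i * (1 - q i) := by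
      rw [Finset.mul_sum]
      exact Finset.sum_le_sum fun i _ =>
        mul_le_mul_of_nonneg_right (hmin i) (sub_nonneg.2 (hq1 i))
    rw [Finset.sum_sub_distrib] at h1
    simp only [Finset.sum_const, Finset.card_univ, Fintype.card_fin, nsmul_eq_mul] at h1
    norm_num at h1
    nlinarith
  have hs6 : s ^ 6 ≤ a * b * c := by
    calc s ^ 6 = ∏ i : Fin 3, s ^ 2 := by simp; ring
      _ ≤ ∏ i, ‖InnerProductSpace.gramSchmidt ℝ v i‖ ^ 2 :=
          Finset.prod_le_prod (fun i _ => by positivity) fun i _ => by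
            gcongr; exact hs i
      _ = _ := by rw [← hprod, hpr]
  set t := b + c with ht
  have ht0 : 0 < t := by positivity
  have h1 : b * c ≤ t ^ 2 / 4 := by rw [ht]; nlinarith [sq_nonneg (b - c)]
  have h2 : b ^ 3 ≤ t ^ 3 := by gcongr; linarith
  have h3 : a ^ 2 * t ≤ 4 := by
    have : t ≤ 3 - a := by linarith
    have h4 : a ^ 2 * t ≤ a ^ 2 * (3 - a) := by gcongr
    nlinarith [mul_nonneg (by linarith : (0:ℝ) ≤ a + 1) (sq_nonneg (a - 2))]
  have h4 : (a * b * c) ^ 4 ≤ 4 * t ^ 3 * c ^ 3 := by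
    calc (a * b * c) ^ 4 = a ^ 4 * b ^ 3 * (b * c) * c ^ 3 := by ring
      _ ≤ a ^ 4 * t ^ 3 * (t ^ 2 / 4) * c ^ 3 := by gcongr
      _ = (a ^ 2 * t) ^ 2 / 4 * t ^ 3 * c ^ 3 := by ring
      _ ≤ 4 ^ 2 / 4 * t ^ 3 * c ^ 3 := by gcongr
      _ = _ := by norm_num
  have h5 : (s ^ 4) ^ 6 ≤ (4 * (d * e)) ^ 6 := by
    calc (s ^ 4) ^ 6 = (s ^ 6) ^ 4 := by ring
      _ ≤ (a * b * c) ^ 4 := by gcongr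
      _ ≤ 4 * t ^ 3 * c ^ 3 := h4
      _ ≤ 4 * (3 * d ^ 2) ^ 3 * (3 * e ^ 2) ^ 3 := by gcongr
      _ = 2916 * (d * e) ^ 6 := by ring
      _ ≤ 4096 * (d * e) ^ 6 := by gcongr; norm_num
      _ = _ := by ring
  exact le_of_pow_le_pow_left₀ (by norm_num) (by positivity) h5

/-- Two-set greedy algorithm: if `d_n(F) ≤ C₀ e^{-c₀ log(n) n^α}` for all `n ≥ 1`,
then `σ_n(F̃) ≤ √(2C₀) e^{-c̃₁ log(n) n^α}` for all `n ≥ 2`, with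
`c̃₁ = 2^{-2-2α} c₀ < c₀`. -/
theorem two_set_greedy_exponential_log_decay
    {H : Type*} [NormedAddCommGroup H] [InnerProductSpace ℝ H]
    (F Ftil : Set H) (hsub : Ftil ⊆ F) (hcomp : IsCompact F)
    (hbound : ∀ f ∈ F, ‖f‖ ≤ 1)
    (f : ℕ → H) (hmem : ∀ n, f n ∈ Ftil)
    (hgreedy : ∀ n : ℕ,
      Metric.infDist (f n) ((Submodule.span ℝ (f '' Set.Iio n) : Submodule ℝ H) : Set H)
        = ⨆ g : Ftil, Metric.infDist (g : H)
            ((Submodule.span ℝ (f '' Set.Iio n) : Submodule ℝ H) : Set H))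
    (C₀ c₀ α : ℝ) (hC₀ : 0 < C₀) (hc₀ : 0 < c₀) (hα : 0 < α)
    (hd : ∀ n : ℕ, 1 ≤ n →
      (⨅ Y : {Y : Submodule ℝ H // Module.rank ℝ Y ≤ n},
          ⨆ g : F, Metric.infDist (g : H) ((Y : Submodule ℝ H) : Set H))
        ≤ C₀ * Real.exp (-c₀ * Real.log n * (n : ℝ) ^ α)) :
    ((2 : ℝ) ^ (-2 - 2 * α) * c₀ < c₀) ∧
    ∀ n : ℕ, 2 ≤ n →
      (⨆ g : Ftil, Metric.infDist (g : H)
          ((Submodule.span ℝ (f '' Set.Iio n) : Submodule ℝ H) : Set H))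
        ≤ Real.sqrt (2 * C₀)
            * Real.exp (-((2 : ℝ) ^ (-2 - 2 * α) * c₀) * Real.log n * (n : ℝ) ^ α) := by
  constructor
  · have : (2 : ℝ) ^ (-2 - 2 * α) < 1 :=
      Real.rpow_lt_one_of_one_lt_of_neg (by norm_num) (by linarith)
    nlinarith
  have hle1 : ∀ (Y : Submodule ℝ H) (g : H), g ∈ F → Metric.infDist g (Y : Set H) ≤ 1 := by
    intro Y g hg
    have h := Metric.infDist_le_dist_of_mem (x := g) (Y.zero_mem : (0 : H) ∈ (Y : Set H))
    rw [dist_zero_right] at h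
    exact h.trans (hbound g hg)
  have hbddF : ∀ Y : Submodule ℝ H,
      BddAbove (Set.range fun g : F => Metric.infDist (g : H) (Y : Set H)) := by
    intro Y
    refine ⟨1, ?_⟩
    rintro _ ⟨g, rfl⟩
    exact hle1 Y g g.2
  have hbddT : ∀ Y : Submodule ℝ H,
      BddAbove (Set.range fun g : Ftil => Metric.infDist (g : H) (Y : Set H)) := by
    intro Y
    refine ⟨1, ?_⟩
    rintro _ ⟨g, rfl⟩
    exact hle1 Y g (hsub g.2)
  -- monotonicity
  have hmono : ∀ i n : ℕ, i ≤ n →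
      Metric.infDist (f n) ((Submodule.span ℝ (f '' Set.Iio n) : Submodule ℝ H) : Set H) ≤
      Metric.infDist (f i) ((Submodule.span ℝ (f '' Set.Iio i) : Submodule ℝ H) : Set H) := by
    intro i n hin
    have hss : Submodule.span ℝ (f '' Set.Iio i) ≤ Submodule.span ℝ (f '' Set.Iio n) :=
      Submodule.span_mono (Set.image_mono (Set.Iio_subset_Iio hin))
    refine (Metric.infDist_le_infDist_of_subset hss ⟨0, Submodule.zero_mem _⟩).trans ?_
    rw [hgreedy i]
    exact le_ciSup (hbddT (Submodule.span ℝ (f '' Set.Iio i))) ⟨f n, hmem n⟩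
  have hgs : ∀ (K : ℕ) (i : Fin K),
      Metric.infDist (f i) ((Submodule.span ℝ (f '' Set.Iio (i : ℕ)) : Submodule ℝ H) : Set H) ≤
      ‖InnerProductSpace.gramSchmidt ℝ (fun j : Fin K => f j) i‖ := by
    intro K i
    set v : Fin K → H := fun j => f j with hv
    have hmem' : v i - InnerProductSpace.gramSchmidt ℝ v i ∈
        Submodule.span ℝ (f '' Set.Iio (i : ℕ)) := by
      rw [InnerProductSpace.gramSchmidt_def, sub_sub_cancel]
      refine Submodule.sum_mem _ fun j hj => ?_
      have hj' : j < i := Finset.mem_Iio.1 hj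
      have h1 := Submodule.starProjection_apply_mem
        (Submodule.span ℝ {InnerProductSpace.gramSchmidt ℝ v j}) (v i)
      have h2 : Submodule.span ℝ {InnerProductSpace.gramSchmidt ℝ v j} ≤
          Submodule.span ℝ (v '' Set.Iio i) := by
        rw [Submodule.span_singleton_le_iff_mem, ← InnerProductSpace.span_gramSchmidt_Iio]
        exact Submodule.subset_span ⟨j, hj', rfl⟩
      refine Submodule.span_mono ?_ (h2 h1)
      rintro _ ⟨k, hk, rfl⟩
      exact ⟨k, hk, rfl⟩
    have h := Metric.infDist_le_dist_of_mem (x := v i) hmem'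
    rw [dist_eq_norm, sub_sub_cancel] at h
    exact h
  -- near-optimal subspaces
  have hY : ∀ m : ℕ, 1 ≤ m → ∀ d : ℝ,
      C₀ * Real.exp (-c₀ * Real.log m * (m : ℝ) ^ α) < d →
      ∃ Y : Submodule ℝ H, Module.rank ℝ Y ≤ m ∧
        ∀ i : ℕ, Metric.infDist (f i) (Y : Set H) ≤ d := by
    intro m hm d hlt
    have : Nonempty {Y : Submodule ℝ H // Module.rank ℝ Y ≤ m} := ⟨⟨⊥, by simp⟩⟩
    obtain ⟨Y, hY⟩ := exists_lt_of_ciInf_lt ((hd m hm).trans_lt hlt)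
    refine ⟨Y.1, Y.2, fun i => ?_⟩
    exact (le_ciSup (hbddF Y.1) ⟨f i, hsub (hmem i)⟩).trans hY.le
  have hv1 : ∀ i, ‖f i‖ ≤ 1 := fun i => hbound _ (hsub (hmem i))
  set σ : ℕ → ℝ := fun n =>
    Metric.infDist (f n) ((Submodule.span ℝ (f '' Set.Iio n) : Submodule ℝ H) : Set H) with hσ
  have hσ0 : ∀ n, 0 ≤ σ n := fun n => Metric.infDist_nonneg
  have hσ1 : ∀ n, σ n ≤ 1 := fun n => hle1 _ _ (hsub (hmem n))
  -- general bound
  have hgen : ∀ m : ℕ, 1 ≤ m → ∀ n : ℕ, 2 * m ≤ n + 1 →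
      σ n ^ 2 ≤ 2 * (C₀ * Real.exp (-c₀ * Real.log m * (m : ℝ) ^ α)) := by
    intro m hm n hn
    have h : ∀ d : ℝ, C₀ * Real.exp (-c₀ * Real.log m * (m : ℝ) ^ α) < d →
        σ n ^ 2 / 2 ≤ d := by
      intro d hlt
      obtain ⟨Y, hYr, hYd⟩ := hY m hm d hlt
      have hd0 : 0 < d := lt_trans (by positivity) hlt
      have := aux_general hm (fun j : Fin (2 * m) => f j) (σ n) d (hσ0 n) (hσ1 n) hd0
        (fun i => (hmono i n (by have := i.2; omega)).trans (hgs _ i)) (fun i => hv1 i) Y hYr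
        (fun i => hYd i)
      linarith
    have := le_of_forall_gt_imp_ge_of_dense h
    linarith
  intro n hn
  rw [← hgreedy n]
  change σ n ≤ _
  have hfinish : ∀ x : ℝ, 2 * ((2 : ℝ) ^ (-2 - 2 * α) * Real.log n * (n : ℝ) ^ α) ≤ x →
      σ n ^ 2 ≤ 2 * (C₀ * Real.exp (-c₀ * x)) →
      σ n ≤ Real.sqrt (2 * C₀)
            * Real.exp (-((2 : ℝ) ^ (-2 - 2 * α) * c₀) * Real.log n * (n : ℝ) ^ α) := by
    intro x hx hσx
    refine le_of_sq_le_sq ?_ (by positivity)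
    rw [mul_pow, Real.sq_sqrt (by positivity), ← Real.exp_nat_mul]
    refine hσx.trans ?_
    rw [← mul_assoc]
    refine mul_le_mul_of_nonneg_left (Real.exp_le_exp.2 ?_) (by positivity)
    push_cast
    have := mul_le_mul_of_nonneg_left hx hc₀.le
    linarith
  have hsplit : (2 : ℝ) ^ (-2 - 2 * α) = 1 / 4 * ((4 : ℝ) ^ α)⁻¹ := by
    rw [Real.rpow_sub (by norm_num), Real.rpow_mul (by norm_num), div_eq_mul_inv]
    congr 2
    · rw [Real.rpow_neg (by norm_num)]; norm_num
    · norm_num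
  have h4pos : (0:ℝ) < (4 : ℝ) ^ α := by positivity
  rcases hn.eq_or_lt with h2 | h3
  · -- n = 2
    subst h2
    set E := Real.exp (-c₀ * Real.log (2 : ℕ) * ((2 : ℕ) : ℝ) ^ α) with hE
    have h4 : σ 2 ^ 4 ≤ 4 * (C₀ * (C₀ * E)) := by
      have h : ∀ d : ℝ, C₀ < d → ∀ e : ℝ, C₀ * E < e → σ 2 ^ 4 / 4 / d ≤ e := by
        intro d hd' e he'
        have hd0 : 0 < d := hC₀.trans hd'
        have he0 : 0 < e := lt_trans (by positivity) he'
        obtain ⟨Y, hYr, hYd⟩ := hY 1 le_rfl d (by simpa using hd')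
        obtain ⟨Z, hZr, hZd⟩ := hY 2 (by norm_num) e he'
        have := aux_three (fun j : Fin 3 => f j) (σ 2) d e (hσ0 2) hd0 he0
          (fun i => (hmono i 2 (by have := i.2; omega)).trans (hgs _ i)) (fun i => hv1 i) Y hYr
          (fun i => hYd i) Z hZr (fun i => hZd i)
        rw [div_le_iff₀ hd0]
        linarith
      have h' : ∀ d : ℝ, C₀ < d → σ 2 ^ 4 / 4 / (C₀ * E) ≤ d := by
        intro d hd'
        have h1 := le_of_forall_gt_imp_ge_of_dense (h d hd')
        rw [div_le_iff₀ (hC₀.trans hd')] at h1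
        rw [div_le_iff₀ (by positivity)]
        linarith
      have h1 := le_of_forall_gt_imp_ge_of_dense h'
      rw [div_le_iff₀ (by positivity)] at h1
      linarith
    refine hfinish (Real.log (2 : ℕ) * ((2 : ℕ) : ℝ) ^ α / 2) ?_ ?_
    · rw [hsplit]
      have h5 : ((4 : ℝ) ^ α)⁻¹ ≤ 1 := inv_le_one_of_one_le₀
        (Real.one_le_rpow (by norm_num) hα.le)
      have h6 : 0 ≤ Real.log (2 : ℕ) * ((2 : ℕ) : ℝ) ^ α :=
        mul_nonneg (Real.log_natCast_nonneg _) (by positivity)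
      have h7 := mul_le_mul_of_nonneg_right h5 h6
      linarith
    · refine le_of_sq_le_sq ?_ (by positivity)
      have h5 : (2 * (C₀ * Real.exp (-c₀ * (Real.log (2 : ℕ) * ((2 : ℕ) : ℝ) ^ α / 2)))) ^ 2
          = 4 * (C₀ * (C₀ * E)) := by
        rw [mul_pow, mul_pow, ← Real.exp_nat_mul, hE]
        have : ((2 : ℕ) : ℝ) * (-c₀ * (Real.log (2 : ℕ) * ((2 : ℕ) : ℝ) ^ α / 2))
          = -c₀ * Real.log (2 : ℕ) * ((2 : ℕ) : ℝ) ^ α := by push_cast; ring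
        rw [this]; ring
      rw [h5]
      calc (σ 2 ^ 2) ^ 2 = σ 2 ^ 4 := by ring
        _ ≤ _ := h4
  · obtain ⟨m, hm2, hm, hm'⟩ : ∃ m : ℕ, 2 ≤ m ∧ 2 * m ≤ n + 1 ∧ n ≤ 2 * m :=
      ⟨(n + 1) / 2, by omega, by omega, by omega⟩
    refine hfinish (Real.log m * (m : ℝ) ^ α) ?_ ?_
    · rw [hsplit]
      have hm2' : (2 : ℝ) ≤ m := by exact_mod_cast hm2
      have hn2' : (n : ℝ) ≤ 2 * m := by exact_mod_cast hm'
      have hn0 : (0 : ℝ) < n := by exact_mod_cast (by omega : 0 < n)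
      have hlog : Real.log n ≤ 2 * Real.log m := by
        rw [← Real.log_rpow (by linarith)]
        refine Real.log_le_log hn0 ?_
        have : (m : ℝ) ^ (2 : ℝ) = m ^ 2 := by norm_cast
        rw [this]; nlinarith
      have hpow : (n : ℝ) ^ α ≤ 4 ^ α * (m : ℝ) ^ α := by
        rw [← Real.mul_rpow (by norm_num) (by positivity)]
        exact Real.rpow_le_rpow hn0.le (by linarith) hα.le
      have hlm : 0 ≤ Real.log m := Real.log_natCast_nonneg _
      have hmα : 0 ≤ (m : ℝ) ^ α := by positivity
      calc 2 * (1 / 4 * ((4 : ℝ) ^ α)⁻¹ * Real.log n * (n : ℝ) ^ α)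
          ≤ 2 * (1 / 4 * ((4 : ℝ) ^ α)⁻¹ * (2 * Real.log m) * (4 ^ α * (m : ℝ) ^ α)) := by gcongr
        _ = Real.log m * (m : ℝ) ^ α := by field_simp; norm_num
    · have := hgen m (by omega) n hm
      rwa [mul_assoc] at this
end

section
/- (Error estimate for optimally chosen points on the subdomain.) Suppose there exist constants C₀ > 0 and α > 0 such that for every n ≥ 1 there is a finite set X_n ⊆ Ω with |X_n| ≤ n and sup_{x∈Ω} dist(Φ x, V(X_n)) ≤ C₀ n^{−α}. Then for every n ≥ 1, the optimal n-point power-function value on the subdomain satisfies inf over all finite sets Y ⊆ Ω̃ with |Y| ≤ n of sup_{x∈Ω̃} dist(Φ x, V(Y)) ≤ 2^{5α+1} C₀ n^{−α}. -/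
theorem aux_exists_near {H : Type*} [NormedAddCommGroup H] [InnerProductSpace ℝ H]
    (V : Submodule ℝ H) [FiniteDimensional ℝ V] (x : H) (d : ℝ)
    (h : Metric.infDist x (V : Set H) ≤ d) : ∃ v ∈ V, ‖x - v‖ ≤ d := by
  refine ⟨V.starProjection x, Submodule.starProjection_apply_mem V x, ?_⟩
  rw [Submodule.starProjection_minimal]
  rw [Metric.infDist_eq_iInf] at h
  simp only [dist_eq_norm] at h
  exact h

theorem aux_det_sq_le {K : ℕ} (hK : 0 < K) (B : Matrix (Fin K) (Fin K) ℝ) :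
    B.det ^ 2 ≤ ((∑ i, ∑ j, B i j ^ 2) / K) ^ K := by
  have hM := Matrix.posSemidef_self_mul_conjTranspose B
  have hH := hM.isHermitian
  have h1 : (B * B.conjTranspose).det = B.det ^ 2 := by
    rw [Matrix.det_mul, Matrix.det_conjTranspose]; simp [sq]
  have h2 : (B * B.conjTranspose).trace = ∑ i, ∑ j, B i j ^ 2 := by
    simp [Matrix.trace, Matrix.mul_apply, sq]
  rw [← h1, ← h2, hH.det_eq_prod_eigenvalues, hH.trace_eq_sum_eigenvalues]
  simp only [RCLike.ofReal_real_eq_id, id]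
  have hKr : (0 : ℝ) < K := by exact_mod_cast hK
  have h0 : ∀ i, 0 ≤ hH.eigenvalues i := hM.eigenvalues_nonneg
  have := Real.geom_mean_le_arith_mean Finset.univ (fun _ => (1 : ℝ)) hH.eigenvalues
    (by simp) (by simpa using hK) (fun i _ => h0 i)
  simp only [Real.rpow_one, Finset.sum_const, Finset.card_univ, Fintype.card_fin, nsmul_eq_mul,
    mul_one, one_mul] at this
  have hp : 0 ≤ ∏ i, hH.eigenvalues i := Finset.prod_nonneg fun i _ => h0 i
  calc ∏ i, hH.eigenvalues i = ((∏ i, hH.eigenvalues i) ^ ((K : ℝ)⁻¹)) ^ K := by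
        rw [Real.rpow_inv_natCast_pow hp hK.ne']
    _ ≤ _ := pow_le_pow_left₀ (Real.rpow_nonneg hp _) this K

theorem aux_basis {K m : ℕ} (W : Submodule ℝ (EuclideanSpace ℝ (Fin K)))
    (hW : Module.finrank ℝ W ≤ m) :
    ∃ b : OrthonormalBasis (Fin K) ℝ (EuclideanSpace ℝ (Fin K)),
      ∀ j : Fin K, m ≤ (j : ℕ) → ∀ w ∈ W, inner ℝ (b j) w = 0 := by
  classical
  let c := stdOrthonormalBasis ℝ W
  let p := Module.finrank ℝ W
  have hpK : p ≤ K := by simpa using Submodule.finrank_le W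
  let v : Fin K → EuclideanSpace ℝ (Fin K) := fun i =>
    if h : (i : ℕ) < p then (c ⟨i, h⟩ : EuclideanSpace ℝ (Fin K)) else 0
  let s : Set (Fin K) := {i | (i : ℕ) < p}
  have hv : Orthonormal ℝ (s.domRestrict v) := by
    have hc : Orthonormal ℝ (fun i : Fin p => (c i : EuclideanSpace ℝ (Fin K))) :=
      c.orthonormal.comp_linearIsometry W.subtypeₗᵢ
    have := hc.comp (fun i : s => (⟨(i : Fin K), i.2⟩ : Fin p)) (by
      intro a b hab
      apply Subtype.ext; apply Fin.ext
      simpa using hab)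
    convert this using 1
    ext1 i
    have hi : ((i : Fin K) : ℕ) < p := i.2
    simp [Set.domRestrict, v, hi]
  obtain ⟨b, hb⟩ := hv.exists_orthonormalBasis_extension_of_card_eq (by simp)
  refine ⟨b, fun j hj w hw => ?_⟩
  have hsum := c.sum_repr ⟨w, hw⟩
  have hsum' : w = ∑ i, c.repr ⟨w, hw⟩ i • (c i : EuclideanSpace ℝ (Fin K)) := by
    have := congrArg (Subtype.val) hsum
    simpa using this.symm
  rw [hsum', inner_sum]
  refine Finset.sum_eq_zero fun i _ => ?_
  have hi : ((⟨i, i.2.trans_le hpK⟩ : Fin K)) ∈ s := i.2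
  have hbi := hb _ hi
  have hvi : v ⟨i, i.2.trans_le hpK⟩ = c i := by
    have : (i : ℕ) < p := i.2
    simp [v, this]
  rw [inner_smul_right, ← hvi, ← hbi, b.orthonormal.inner_eq_zero, mul_zero]
  intro h
  have := congrArg Fin.val h
  have := i.2
  simp at *
  omega

theorem aux_key {m : ℕ} (hm : 0 < m) (r : Fin (2 * m) → EuclideanSpace ℝ (Fin (2 * m)))
    (W : Submodule ℝ (EuclideanSpace ℝ (Fin (2 * m)))) (hW : Module.finrank ℝ W ≤ m)
    (σ d : ℝ) (hσ : 0 < σ) (hd : 0 < d) (h1 : ∀ i, ‖r i‖ ≤ σ)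
    (h2 : ∀ i, ∃ w ∈ W, ‖r i - w‖ ≤ d) :
    (Matrix.of fun i j => r i j).det ^ 2 ≤ (2 * σ * d) ^ (2 * m) := by
  obtain ⟨b, hb⟩ := aux_basis W hW
  let c : Fin (2 * m) → ℝ := fun j => if (j : ℕ) < m then σ⁻¹ else d⁻¹
  let A : Matrix (Fin (2 * m)) (Fin (2 * m)) ℝ := Matrix.of fun i j => r i j
  let U : Matrix (Fin (2 * m)) (Fin (2 * m)) ℝ := Matrix.of fun k j => b j k
  have hU : U.det ^ 2 = 1 := by
    have := (EuclideanSpace.basisFun (Fin (2 * m)) ℝ).det_to_matrix_orthonormalBasis_real b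
    have hUe : (EuclideanSpace.basisFun (Fin (2 * m)) ℝ).toBasis.det b = U.det := by
      rw [Module.Basis.det_apply]
      congr 1
    rw [hUe] at this
    rcases this with h | h <;> rw [h] <;> norm_num
  have hc : (∏ j, c j) = (σ⁻¹ * d⁻¹) ^ m := by
    have : ∏ j, c j = ∏ j ∈ Finset.range (2 * m), (if j < m then σ⁻¹ else d⁻¹) :=
      Fin.prod_univ_eq_prod_range (fun j => if j < m then σ⁻¹ else d⁻¹) (2 * m)
    rw [this, two_mul, Finset.prod_range_add, mul_pow]
    congr 1
    · rw [Finset.prod_congr rfl (g := fun _ => σ⁻¹)]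
      · simp
      · intro x hx; simp at hx; simp [hx]
    · simp
  have hB := aux_det_sq_le (by omega) (A * U * Matrix.diagonal c)
  have hBij : ∀ i j, (A * U * Matrix.diagonal c) i j = inner ℝ (b j) (r i) * c j := by
    intro i j
    rw [Matrix.mul_diagonal]
    congr 1
  have hrow : ∀ i, ∑ j, (A * U * Matrix.diagonal c) i j ^ 2 ≤ 2 := by
    intro i
    simp only [hBij]
    obtain ⟨w, hw, hwd⟩ := h2 i
    have hle : ∀ j, (inner ℝ (b j) (r i) * c j) ^ 2 ≤
        σ⁻¹ ^ 2 * ‖inner ℝ (b j) (r i)‖ ^ 2 + d⁻¹ ^ 2 * ‖inner ℝ (b j) (r i - w)‖ ^ 2 := by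
      intro j
      by_cases hj : (j : ℕ) < m
      · simp only [c, hj, if_true, Real.norm_eq_abs, sq_abs]
        nlinarith [mul_nonneg (sq_nonneg d⁻¹) (sq_nonneg (inner ℝ (b j) (r i - w)))]
      · simp only [c, hj, if_false, Real.norm_eq_abs, sq_abs]
        rw [inner_sub_right, hb j (by omega) w hw, sub_zero]
        nlinarith [mul_nonneg (sq_nonneg σ⁻¹) (sq_nonneg (inner ℝ (b j) (r i)))]
    refine (Finset.sum_le_sum fun j _ => hle j).trans ?_
    rw [Finset.sum_add_distrib, ← Finset.mul_sum, ← Finset.mul_sum]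
    have e1 := b.orthonormal.sum_inner_products_le (s := Finset.univ) (r i)
    have e2 := b.orthonormal.sum_inner_products_le (s := Finset.univ) (r i - w)
    have e3 : ‖r i‖ ^ 2 ≤ σ ^ 2 := pow_le_pow_left₀ (norm_nonneg _) (h1 i) 2
    have e4 : ‖r i - w‖ ^ 2 ≤ d ^ 2 := pow_le_pow_left₀ (norm_nonneg _) hwd 2
    have e5 := mul_le_mul_of_nonneg_left (e1.trans e3) (sq_nonneg σ⁻¹)
    have e6 := mul_le_mul_of_nonneg_left (e2.trans e4) (sq_nonneg d⁻¹)
    have e7 : σ⁻¹ ^ 2 * σ ^ 2 = 1 := by field_simp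
    have e8 : d⁻¹ ^ 2 * d ^ 2 = 1 := by field_simp
    linarith
  have hsum : (∑ i, ∑ j, (A * U * Matrix.diagonal c) i j ^ 2) / ((2 * m : ℕ) : ℝ) ≤ 2 := by
    rw [div_le_iff₀ (by positivity)]
    refine (Finset.sum_le_sum fun i _ => hrow i).trans ?_
    simp; linarith
  have hfin := hB.trans (pow_le_pow_left₀ (by positivity) hsum (2 * m))
  rw [Matrix.det_mul, Matrix.det_mul, Matrix.det_diagonal, hc, mul_pow, mul_pow, hU, mul_one,
    ← pow_mul, mul_comm m 2] at hfin
  change A.det ^ 2 ≤ _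
  have hs : (σ⁻¹ * d⁻¹) ^ (2 * m) * (σ * d) ^ (2 * m) = 1 := by
    rw [← mul_pow]; field_simp; simp
  calc A.det ^ 2 = A.det ^ 2 * (σ⁻¹ * d⁻¹) ^ (2 * m) * (σ * d) ^ (2 * m) := by
        rw [mul_assoc, hs, mul_one]
    _ ≤ 2 ^ (2 * m) * (σ * d) ^ (2 * m) := mul_le_mul_of_nonneg_right hfin (by positivity)
    _ = _ := by rw [← mul_pow, mul_assoc]

theorem aux_greedy {H : Type*} [NormedAddCommGroup H] [InnerProductSpace ℝ H]
    (f : ℕ → H) (N m : ℕ) (hm : 0 < m) (τ : ℕ → ℝ) (σ d : ℝ) (hσ : 0 < σ) (hd : 0 < d)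
    (hτ0 : ∀ i < 2 * m, 0 < τ (N + i))
    (hτ : ∀ i, τ i ≤ Metric.infDist (f i) (Submodule.span ℝ (f '' Set.Iio i) : Set H))
    (h1 : ∀ i, Metric.infDist (f i) (Submodule.span ℝ (f '' Set.Iio N) : Set H) ≤ σ)
    (V : Submodule ℝ H) [FiniteDimensional ℝ V] (hV : Module.finrank ℝ V ≤ m)
    (h2 : ∀ i, Metric.infDist (f i) (V : Set H) ≤ d) :
    ∏ i : Fin (2 * m), τ (N + i) ^ 2 ≤ (2 * σ * d) ^ (2 * m) := by
  let g := InnerProductSpace.gramSchmidt ℝ f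
  have hg : ∀ i, f i - g i ∈ Submodule.span ℝ (f '' Set.Iio i) := by
    intro i
    rw [← InnerProductSpace.span_gramSchmidt_Iio ℝ f i]
    have : f i - g i = ∑ k ∈ Finset.Iio i, (inner ℝ (g k) (f i) / (‖g k‖ : ℝ) ^ 2) • g k := by
      conv_lhs => rw [InnerProductSpace.gramSchmidt_def'' ℝ f i]
      simp [g]
    rw [this]
    refine Submodule.sum_mem _ fun k hk => Submodule.smul_mem _ _ (Submodule.subset_span ?_)
    exact ⟨k, by simpa using hk, rfl⟩
  have hgn : ∀ i, τ i ≤ ‖g i‖ := by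
    intro i
    refine (hτ i).trans ((Metric.infDist_le_dist_of_mem (hg i)).trans ?_)
    rw [dist_eq_norm]; simp
  have hort : ∀ i n, n ≤ i → ∀ v ∈ Submodule.span ℝ (f '' Set.Iio n), inner ℝ (g i) v = 0 := by
    intro i n hn v hv
    induction hv using Submodule.span_induction with
    | mem x hx =>
      obtain ⟨k, hk, rfl⟩ := hx
      exact InnerProductSpace.gramSchmidt_inv_triangular ℝ f (lt_of_lt_of_le hk hn)
    | zero => simp
    | add x y _ _ hx hy => rw [inner_add_right, hx, hy, add_zero]
    | smul a x _ hx => rw [inner_smul_right, hx, mul_zero]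
  have hdiag : ∀ i, inner ℝ (g i) (f i) = ‖g i‖ ^ 2 := by
    intro i
    have := hort i i le_rfl _ (hg i)
    rw [inner_sub_right, real_inner_self_eq_norm_sq] at this
    linarith
  let e : Fin (2 * m) → H := fun j => (‖g (N + j)‖)⁻¹ • g (N + j)
  have hpos : ∀ j : Fin (2 * m), 0 < ‖g (N + j)‖ := fun j => (hτ0 j j.2).trans_le (hgn _)
  have he : Orthonormal ℝ e := by
    constructor
    · intro j
      have := hpos j
      simp only [e, norm_smul, norm_inv, norm_norm]
      field_simp
    · intro i j hij
      simp only [e, inner_smul_left, inner_smul_right]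
      have : inner ℝ (g (N + i)) (g (N + j)) = 0 :=
        InnerProductSpace.gramSchmidt_orthogonal ℝ f (by
          intro h; apply hij; apply Fin.ext; omega)
      simp [this]
  let P : H →ₗ[ℝ] EuclideanSpace ℝ (Fin (2 * m)) :=
    { toFun := fun x => WithLp.toLp 2 fun j => inner ℝ (e j) x
      map_add' := by intro x y; ext j; simp [inner_add_right]
      map_smul' := by intro a x; ext j; simp [inner_smul_right] }
  have hPa : ∀ x j, P x j = inner ℝ (e j) x := fun _ _ => rfl
  have hPn : ∀ x, ‖P x‖ ≤ ‖x‖ := by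
    intro x
    rw [← sq_le_sq₀ (norm_nonneg _) (norm_nonneg _), EuclideanSpace.norm_sq_eq]
    simpa only [hPa] using he.sum_inner_products_le (s := Finset.univ) x
  have key := aux_key hm (fun i => P (f (N + i))) (V.map P)
    ((Submodule.finrank_map_le P V).trans hV) σ d hσ hd ?_ ?_
  · refine le_trans (le_of_eq_of_le ?_ (Finset.prod_le_prod (s := Finset.univ)
      (f := fun i : Fin (2 * m) => τ (N + i) ^ 2)
      (g := fun i : Fin (2 * m) => (‖g (N + i)‖) ^ 2) (fun i _ => sq_nonneg _)
      (fun i _ => pow_le_pow_left₀ (hτ0 i i.2).le (hgn _) 2))) (le_of_eq_of_le ?_ key)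
    · rfl
    · rw [Finset.prod_pow, Matrix.det_of_isLowerTriangular]
      · congr 1
        refine Finset.prod_congr rfl fun i _ => ?_
        have := hpos i
        simp only [Matrix.of_apply, hPa, e, inner_smul_left, hdiag]
        simp
        field_simp
      · intro i j hij
        simp only [Matrix.of_apply, hPa, e, inner_smul_left]
        have hij' : i < j := by simpa using hij
        have : inner ℝ (g (N + j)) (f (N + i)) = 0 :=
          InnerProductSpace.gramSchmidt_inv_triangular ℝ f (by
            have : (i : ℕ) < j := hij'
            omega)
        simp [this]
  · intro i
    have : FiniteDimensional ℝ (Submodule.span ℝ (f '' Set.Iio N)) :=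
      FiniteDimensional.span_of_finite ℝ ((Set.finite_Iio N).image f)
    obtain ⟨v, hv, hvd⟩ := aux_exists_near _ _ _ (h1 (N + i))
    have : P (f (N + i)) = P (f (N + i) - v) := by
      rw [map_sub]
      have : P v = 0 := by
        ext j
        rw [hPa]
        simp [e, inner_smul_left, hort (N + j) N (by omega) v hv]
      rw [this, sub_zero]
    simp only [this]
    exact (hPn _).trans hvd
  · intro i
    obtain ⟨v, hv, hvd⟩ := aux_exists_near _ _ _ (h2 (N + i))
    refine ⟨P v, Submodule.mem_map_of_mem hv, ?_⟩
    rw [← map_sub]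
    exact (hPn _).trans hvd

theorem aux_num (s : ℕ → ℝ) (hs : Antitone s) (hs0 : ∀ n, 0 ≤ s n) (C₀ α : ℝ) (hC₀ : 0 < C₀)
    (hα : 0 < α)
    (hbase : s 1 ≤ 2 * 2 ^ α * C₀)
    (hstep : ∀ m : ℕ, 1 ≤ m →
      s (4 * m) ^ 2 ≤ 2 * 2 ^ α * (s (2 * m) * (C₀ * (m : ℝ) ^ (-α)))) :
    ∀ n : ℕ, 1 ≤ n → s n ≤ 2 ^ (5 * α + 1) * C₀ * (n : ℝ) ^ (-α) := by
  set q : ℝ := 2 ^ α with hq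
  have hq0 : 0 < q := by positivity
  have hq1 : 1 ≤ q := Real.one_le_rpow (by norm_num) hα.le
  have h5 : (2 : ℝ) ^ (5 * α + 1) = 2 * q ^ 5 := by
    rw [Real.rpow_add (by norm_num), Real.rpow_one, mul_comm 5 α, Real.rpow_mul (by norm_num), hq]
    norm_cast
    ring
  have hpow : ∀ k : ℕ, ((2 : ℝ) ^ k) ^ (-α) = (q ^ k)⁻¹ := by
    intro k
    rw [← Real.rpow_natCast, ← Real.rpow_mul (by norm_num), hq, ← Real.rpow_natCast,
      ← Real.rpow_mul (by norm_num), ← Real.rpow_neg (by norm_num)]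
    congr 1; ring
  have hk : ∀ k : ℕ, s (2 ^ (k + 1)) ≤ 2 * q ^ 4 * C₀ * (q ^ (k + 1))⁻¹ := by
    intro k
    induction k with
    | zero =>
      have h1 : s (2 ^ (0 + 1)) ≤ s 1 := hs (by norm_num)
      refine (h1.trans hbase).trans ?_
      have : 2 * q ^ 4 * C₀ * (q ^ (0 + 1))⁻¹ = 2 * q * C₀ * q ^ 2 := by
        field_simp; simp
      rw [this]
      have h2 : 1 ≤ q ^ 2 := one_le_pow₀ hq1
      exact le_mul_of_one_le_right (by positivity) h2
    | succ k ih =>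
      have h := hstep (2 ^ k) Nat.one_le_two_pow
      rw [show 4 * 2 ^ k = 2 ^ (k + 1 + 1) by ring, show 2 * 2 ^ k = 2 ^ (k + 1) by ring] at h
      push_cast at h
      rw [hpow] at h
      rw [← sq_le_sq₀ (hs0 _) (by positivity)]
      refine h.trans ?_
      calc 2 * q * (s (2 ^ (k + 1)) * (C₀ * (q ^ k)⁻¹))
          ≤ 2 * q * ((2 * q ^ 4 * C₀ * (q ^ (k + 1))⁻¹) * (C₀ * (q ^ k)⁻¹)) := by gcongr
        _ = _ := by field_simp; ring
  have hk' : ∀ k : ℕ, s (2 ^ k) ≤ 2 * q ^ 4 * C₀ * (q ^ k)⁻¹ := by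
    intro k
    cases k with
    | zero =>
      simp only [pow_zero, inv_one, mul_one]
      refine hbase.trans ?_
      have : q ≤ q ^ 4 := le_self_pow₀ hq1 (by norm_num)
      gcongr
    | succ k => exact hk k
  intro n hn
  set k := Nat.log 2 n
  have h1 : 2 ^ k ≤ n := Nat.pow_log_le_self 2 (by omega)
  have h2 : n < 2 ^ (k + 1) := Nat.lt_pow_succ_log_self (by norm_num) n
  refine (hs h1).trans ((hk' k).trans ?_)
  have h3 : (q ^ (k + 1))⁻¹ ≤ (n : ℝ) ^ (-α) := by
    rw [← hpow]
    refine Real.rpow_le_rpow_of_nonpos (by exact_mod_cast hn) (by exact_mod_cast h2.le)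
      (by linarith)
  rw [h5]
  calc 2 * q ^ 4 * C₀ * (q ^ k)⁻¹ = 2 * q ^ 5 * C₀ * (q ^ (k + 1))⁻¹ := by
        rw [pow_succ q k]; field_simp
    _ ≤ _ := by gcongr


/-- Error estimate for optimally chosen points on the subdomain: if interpolation on
`Ω` converges at rate `C₀ n^{-α}`, then the optimal `n`-point power-function value on
an arbitrary subset `Ω̃ ⊆ Ω` is bounded by `2^{5α+1} C₀ n^{-α}`. -/
theorem optimal_points_on_subdomain
    {Ω : Type*} [Nonempty Ω] {H : Type*} [NormedAddCommGroup H] [DecidableEq H]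
    [InnerProductSpace ℝ H] [CompleteSpace H]
    (Ωtil : Set Ω) (Φ : Ω → H)
    (hbound : ∀ x : Ω, ‖Φ x‖ ≤ 1) (hcomp : IsCompact (Set.range Φ))
    (C₀ α : ℝ) (hC₀ : 0 < C₀) (hα : 0 < α)
    (happrox : ∀ n : ℕ, 1 ≤ n → ∃ X : Finset Ω, X.card ≤ n ∧
      (⨆ x : Ω, Metric.infDist (Φ x)
          ((Submodule.span ℝ ((X.image Φ : Finset H) : Set H) : Submodule ℝ H) : Set H))
        ≤ C₀ * (n : ℝ) ^ (-α)) :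
    ∀ n : ℕ, 1 ≤ n →
      (⨅ Y : {Y : Finset Ω // (Y : Set Ω) ⊆ Ωtil ∧ Y.card ≤ n},
          ⨆ x : Ωtil, Metric.infDist (Φ (x : Ω))
            ((Submodule.span ℝ (((Y : Finset Ω).image Φ : Finset H) : Set H)
                : Submodule ℝ H) : Set H))
        ≤ 2 ^ (5 * α + 1) * C₀ * (n : ℝ) ^ (-α) := by
  intro n hn
  classical
  let S : Finset Ω → Submodule ℝ H := fun Y => Submodule.span ℝ ((Y.image Φ : Finset H) : Set H)
  have hbdd : ∀ V : Submodule ℝ H, ∀ x, Metric.infDist (Φ x) (V : Set H) ≤ 1 := by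
    intro V x
    refine (Metric.infDist_le_dist_of_mem V.zero_mem).trans ?_
    simpa using hbound x
  have hfd : ∀ Y, FiniteDimensional ℝ (S Y) := fun Y => FiniteDimensional.span_finset ℝ _
  let E : Finset Ω → ℝ := fun Y => ⨆ x : Ωtil, Metric.infDist (Φ (x : Ω)) (S Y : Set H)
  have hE0 : ∀ Y, 0 ≤ E Y := fun Y => Real.iSup_nonneg fun x => Metric.infDist_nonneg
  have hbd : ∀ Y, BddAbove (Set.range fun x : Ωtil => Metric.infDist (Φ (x : Ω)) (S Y : Set H)) :=
    fun Y => ⟨1, by rintro _ ⟨x, rfl⟩; exact hbdd _ _⟩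
  have hinf : ∀ Y : Finset Ω, (Y : Set Ω) ⊆ Ωtil → Y.card ≤ n →
      (⨅ Y : {Y : Finset Ω // (Y : Set Ω) ⊆ Ωtil ∧ Y.card ≤ n}, E Y) ≤ E Y := by
    intro Y h1 h2
    exact ciInf_le ⟨0, by rintro _ ⟨Z, rfl⟩; exact hE0 _⟩
      (⟨Y, h1, h2⟩ : {Y : Finset Ω // (Y : Set Ω) ⊆ Ωtil ∧ Y.card ≤ n})
  change (⨅ Y : {Y : Finset Ω // (Y : Set Ω) ⊆ Ωtil ∧ Y.card ≤ n}, E Y) ≤ _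
  rcases isEmpty_or_nonempty Ωtil with hemp | hne
  · refine (hinf ∅ (by simp) (by simp)).trans ?_
    simp only [E, Real.iSup_of_isEmpty]
    positivity
  let γ : ℝ := 2 ^ (-α / 2)
  have hγ0 : 0 < γ := by positivity
  have hγ1 : γ < 1 := Real.rpow_lt_one_of_one_lt_of_neg (by norm_num) (by linarith)
  have hγ2 : γ ^ 2 * 2 ^ α = 1 := by
    rw [sq, ← Real.rpow_add (by norm_num), ← Real.rpow_add (by norm_num)]
    ring_nf; simp
  have hpick : ∀ Y : Finset Ω, ∃ x : Ωtil, γ * E Y ≤ Metric.infDist (Φ (x : Ω)) (S Y : Set H) := by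
    intro Y
    rcases (hE0 Y).eq_or_lt with h | h
    · exact ⟨hne.some, by rw [← h, mul_zero]; exact Metric.infDist_nonneg⟩
    · obtain ⟨x, hx⟩ := exists_lt_of_lt_ciSup (show γ * E Y < E Y by nlinarith)
      exact ⟨x, hx.le⟩
  choose pick hpick using hpick
  let Y : ℕ → Finset Ω := fun k => Nat.rec ∅ (fun _ Z => insert (pick Z : Ω) Z) k
  have hYs : ∀ k, Y (k + 1) = insert (pick (Y k) : Ω) (Y k) := fun k => rfl
  have hYsub : ∀ k : ℕ, (SetLike.coe (Y k) : Set Ω) ⊆ Ωtil := by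
    intro k
    induction k with
    | zero => simp [Y]
    | succ k ih =>
      rw [hYs, Finset.coe_insert]
      exact Set.insert_subset (pick (Y k)).2 ih
  have hYcard : ∀ k, (Y k).card ≤ k := by
    intro k
    induction k with
    | zero => simp [Y]
    | succ k ih =>
      rw [hYs]
      exact (Finset.card_insert_le _ _).trans (by omega)
  let f : ℕ → H := fun k => Φ (pick (Y k) : Ω)
  have hYf : ∀ k, ((Finset.image Φ (Y k) : Finset H) : Set H) = f '' Set.Iio k := by
    intro k
    induction k with
    | zero => simp [Y]
    | succ k ih =>
      rw [hYs, Finset.image_insert, Finset.coe_insert, ih, show Φ (pick (Y k) : Ω) = f k from rfl,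
        ← Set.image_insert_eq]
      congr 1
      ext j
      simp only [Set.mem_insert_iff, Set.mem_Iio]
      omega
  have hSf : ∀ k, S (Y k) = Submodule.span ℝ (f '' Set.Iio k) := by
    intro k
    simp only [S, hYf]
  have hanti : Antitone fun k => E (Y k) := by
    intro a b hab
    refine ciSup_mono (hbd _) fun x => ?_
    refine Metric.infDist_le_infDist_of_subset ?_ ⟨0, (S (Y a)).zero_mem⟩
    rw [hSf, hSf]
    exact Submodule.span_mono (Set.image_mono (Set.Iio_subset_Iio hab))
  have hmain : ∀ N m : ℕ, 1 ≤ m → (∀ i < 2 * m, 0 < E (Y (N + i))) →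
      ∏ i : Fin (2 * m), (γ * E (Y (N + i))) ^ 2
        ≤ (2 * E (Y N) * (C₀ * (m : ℝ) ^ (-α))) ^ (2 * m) := by
    intro N m hm hpos
    obtain ⟨X, hX, hXd⟩ := happrox m hm
    have := hfd X
    have hmr : (0 : ℝ) < m := by exact_mod_cast hm
    refine aux_greedy f N m hm (fun i => γ * E (Y i)) (E (Y N)) (C₀ * (m : ℝ) ^ (-α))
      (hpos 0 (by omega)) (by positivity) (fun i hi => mul_pos hγ0 (hpos i hi)) ?_ ?_ (S X) ?_ ?_
    · intro i
      rw [← hSf]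
      exact hpick (Y i)
    · intro i
      rw [← hSf]
      exact le_ciSup (hbd (Y N)) (pick (Y i))
    · exact (finrank_span_finset_le_card _).trans (Finset.card_image_le.trans hX)
    · intro i
      refine le_trans ?_ hXd
      exact le_ciSup (f := fun x : Ω => Metric.infDist (Φ x) (S X : Set H))
        ⟨1, by rintro _ ⟨x, rfl⟩; exact hbdd _ _⟩ (pick (Y i) : Ω)
  refine (hinf (Y n) (hYsub n) (hYcard n)).trans ?_
  have hanti' : ∀ a b : ℕ, a ≤ b → E (Y b) ≤ E (Y a) := fun a b hab => hanti hab
  clear hpick hYs hYf hSf hinf hbd hYsub hYcard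
  clear_value f Y E γ
  refine aux_num (fun k => E (Y k)) hanti (fun k => hE0 _) C₀ α hC₀ hα ?_ ?_ n hn
  · show E (Y 1) ≤ _
    rcases (hE0 (Y 1)).eq_or_lt with h | h
    · rw [← h]; positivity
    have h0 : 0 < E (Y 0) := h.trans_le (hanti' _ _ (by norm_num))
    have := hmain 0 1 le_rfl (by
      intro i hi
      exact h.trans_le (hanti' _ _ (by omega)))
    rw [show 2 * 1 = 2 from rfl, Fin.prod_univ_two] at this
    simp only [Fin.val_zero, Fin.val_one, add_zero, Nat.cast_one, Real.one_rpow, mul_one, zero_add] at this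
    rw [← mul_pow, sq_le_sq₀ (by positivity) (by positivity)] at this
    have h3 : γ ^ 2 * E (Y 1) ≤ 2 * C₀ := by
      refine le_of_mul_le_mul_left ?_ h0
      linarith
    have h4 := mul_le_mul_of_nonneg_right h3 (show (0 : ℝ) ≤ 2 ^ α by positivity)
    calc E (Y 1) = (γ ^ 2 * 2 ^ α) * E (Y 1) := by rw [hγ2, one_mul]
      _ = γ ^ 2 * E (Y 1) * 2 ^ α := by ring
      _ ≤ _ := by linarith
  · intro m hm
    show E (Y (4 * m)) ^ 2 ≤ 2 * 2 ^ α * (E (Y (2 * m)) * (C₀ * (m : ℝ) ^ (-α)))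
    have hmr : (0 : ℝ) < m := by exact_mod_cast hm
    have hR := hE0 (Y (2 * m))
    rcases (hE0 (Y (4 * m))).eq_or_lt with h | h
    · rw [← h, zero_pow two_ne_zero]; positivity
    have := hmain (2 * m) m hm (by
      intro i hi
      exact h.trans_le (hanti' _ _ (by omega)))
    have h2 : ((γ * E (Y (4 * m))) ^ 2) ^ (2 * m) ≤
        ∏ i : Fin (2 * m), (γ * E (Y (2 * m + i))) ^ 2 := by
      have hc : ((γ * E (Y (4 * m))) ^ 2) ^ (2 * m) =
          ∏ i : Fin (2 * m), (γ * E (Y (4 * m))) ^ 2 := by simp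
      rw [hc]
      refine Finset.prod_le_prod (fun i _ => sq_nonneg _) fun i _ => ?_
      have : E (Y (4 * m)) ≤ E (Y (2 * m + i)) := hanti' _ _ (by omega)
      gcongr
    have h3 := (pow_le_pow_iff_left₀ (sq_nonneg _) (by positivity) (by omega)).1 (h2.trans this)
    have h4 := mul_le_mul_of_nonneg_right h3 (show (0 : ℝ) ≤ 2 ^ α by positivity)
    calc E (Y (4 * m)) ^ 2 = (γ ^ 2 * 2 ^ α) * E (Y (4 * m)) ^ 2 := by rw [hγ2, one_mul]
      _ = (γ * E (Y (4 * m))) ^ 2 * 2 ^ α := by ring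
      _ ≤ _ := by linarith
end
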